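/- Let K ∈ ℝ, N > 1, let (X,d,m) be an essentially non-branching metric measure space with m(X) = 1 and supp m = X satisfying CD₁(K,N), let u : X → ℝ be 1-Lipschitz, and assume given a quotient map, disintegration and ray map for R_u^b as in the ray-map setting, with each density h_α continuous and strictly positive in the interior of its domain interval. Then for every Borel set Q̄ ⊆ Q with q(Q̄) > 0 and all R0 < R1 and L0, L1 > 0 such that the interval [R0, R1 + L1] is contained in the domain of h_α for q-a.e. α ∈ Q̄, one has for every t ∈ [0,1], with R_t := (1−t)R0 + tR1 and L_t := (1−t)L0 + tL1: L_t^{1/N} · sup_{α∈Q̄} h_α(R_t)^{1/N} ≥ L_0^{1/N} · τ^{(1−t)}_{K,N}(R1−R0) · inf_{α∈Q̄} h_α(R_0)^{1/N} + L_1^{1/N} · τ^{(t)}_{K,N}(R1−R0) · inf_{α∈Q̄} h_α(R_1)^{1/N}. -/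

import Mathlib

/-!
The inequality is local along rays: it holds, with `inf` and `sup` removed, on `q`-almost every
single ray of `Q̄`, and one such ray suffices for the statement.

In the coordinates `x ↦ (f x, -u x)` the measure `m` restricted to the non-branched transport set
becomes `H(α, r) q(dα) dr` with a jointly measurable `H`; on almost every ray `H(α, ·)` is a
translate of `h α` (`RaySetting.exists_density`; measurability of the transport set comes from
universal measurability of analytic sets, `analytic_nullMeasurable`).

Fix a set `B` of rays with `q(B) > 0` and intervals `J₀`, `J₁` in the coordinate `-u`, with `J₀`
to the left of `J₁`. Apply `CD₁(K,N)` to the two probability measures that are uniform on `B × J₀`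
and on `B × J₁` in these coordinates. Coupling them ray by ray shows that `u` is a Kantorovich
potential for them, so the plan `π` is carried by geodesics with endpoints in `Γ_u`; since there is
no branching in `T_u^b`, these geodesics stay inside rays (`RaySetting.geodesic_mem`). So the
interpolated measure lives on `B × J_t`, and Jensen's inequality (`renyi_le`) bounds its entropy.
This gives the inequality with lower bounds of `H` on `J₀`, `J₁` and an upper bound on `J_t`
(`RaySetting.core_bounded`, `RaySetting.core`).

Letting the intervals shrink over countably many rational data and using the continuity of `h α`
yields the inequality on almost every ray, with any finite constants below the distortion
coefficients near `R₁ - R₀` (`RaySetting.pointwise`). If `K (R₁ - R₀)² ≥ (N - 1) π²`, the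
coefficients are infinite on slightly longer intervals and the same inequality is contradictory
(`RaySetting.subcritical`); otherwise they are continuous and finite at `R₁ - R₀`.
-/

open MeasureTheory Set ENNReal

noncomputable section

namespace CDNote

section Sets
variable {X : Type*} [MetricSpace X]

/-- A constant speed geodesic, as a continuous map from `[0,1]`. -/
def IsCSG (γ : C(unitInterval, X)) : Prop :=
  ∀ s t : unitInterval, dist (γ s) (γ t) = |(s : ℝ) - (t : ℝ)| * dist (γ 0) (γ 1)

/-- The set `Γ_u` associated to a `1`-Lipschitz function `u`. -/
def Gamma (u : X → ℝ) : Set (X × X) := {p | u p.1 - u p.2 = dist p.1 p.2}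

/-- The set `Γ_u⁻¹`. -/
def GammaInv (u : X → ℝ) : Set (X × X) := {p | (p.2, p.1) ∈ Gamma u}

/-- The transport relation `R_u = Γ_u ∪ Γ_u⁻¹`. -/
def Ru (u : X → ℝ) : Set (X × X) := Gamma u ∪ GammaInv u

/-- The transport set `T_u = P₁(R_u \ {x = y})`. -/
def Tu (u : X → ℝ) : Set X := {x | ∃ y, (x, y) ∈ Ru u ∧ y ≠ x}

/-- The set of forward branching points `A_{+,u}`. -/
def Aplus (u : X → ℝ) : Set X :=
  {x | x ∈ Tu u ∧ ∃ z w, (x, z) ∈ Gamma u ∧ (x, w) ∈ Gamma u ∧ (z, w) ∉ Ru u}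

/-- The set of backward branching points `A_{-,u}`. -/
def Aminus (u : X → ℝ) : Set X :=
  {x | x ∈ Tu u ∧ ∃ z w, (z, x) ∈ Gamma u ∧ (w, x) ∈ Gamma u ∧ (z, w) ∉ Ru u}

/-- The non-branched transport set `T_u^b = T_u \ (A_{+,u} ∪ A_{-,u})`. -/
def Tub (u : X → ℝ) : Set X := Tu u \ (Aplus u ∪ Aminus u)

/-- The non-branched transport relation `R_u^b = R_u ∩ (T_u^b × T_u^b)`. -/
def Rub (u : X → ℝ) : Set (X × X) := Ru u ∩ (Tub u) ×ˢ (Tub u)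

/-- A closed non-null ray for `u`: the image of a curve parametrized by arclength on a closed
nondegenerate interval, along which `u` is affine with slope `-1`. -/
def IsRay (u : X → ℝ) (S : Set X) : Prop :=
  ∃ (I : Set ℝ) (γ : ℝ → X),
    IsClosed I ∧ I.OrdConnected ∧ (∃ a ∈ I, ∃ b ∈ I, a < b) ∧
    S = γ '' I ∧
    (∀ s ∈ I, ∀ t ∈ I, dist (γ s) (γ t) = |s - t|) ∧
    (∀ s ∈ I, ∀ t ∈ I, u (γ s) - u (γ t) = t - s)

/-- A transport ray of `Γ_u`: a ray that is maximal with respect to inclusion. -/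
def IsTransportRay (u : X → ℝ) (S : Set X) : Prop :=
  IsRay u S ∧ ∀ S' : Set X, IsRay u S' → S ⊆ S' → S' = S

end Sets

section MMS
variable {X : Type*} [MetricSpace X] [MeasurableSpace X]

/-- `π` is a coupling of `μ` and `ν`. -/
def IsCoupling (π : Measure (X × X)) (μ ν : Measure X) : Prop :=
  π.map Prod.fst = μ ∧ π.map Prod.snd = ν

/-- The infimal `p`-th power transport cost between two measures. -/
def Wcost (p : ℝ) (μ ν : Measure X) : ℝ≥0∞ :=
  ⨅ (π : Measure (X × X)) (_ : IsCoupling π μ ν), ∫⁻ z, edist z.1 z.2 ^ p ∂π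

/-- The `p`-Wasserstein distance, with values in `[0,∞]`. -/
def Wp (p : ℝ) (μ ν : Measure X) : ℝ≥0∞ := Wcost p μ ν ^ (1 / p)

/-- `μ` has finite `p`-th moment. -/
def FiniteMoment (p : ℝ) (μ : Measure X) : Prop :=
  ∃ x₀ : X, ∫⁻ x, edist x x₀ ^ p ∂μ ≠ ∞

end MMS

/-- The distortion coefficient `σ_{K,N}^{(t)}(θ)`, valued in `[0,∞]`. -/
def sigmaCoef (K N t θ : ℝ) : ℝ≥0∞ :=
  if N * Real.pi ^ 2 ≤ K * θ ^ 2 then ∞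
  else if 0 < K * θ ^ 2 then
    ENNReal.ofReal (Real.sin (t * θ * Real.sqrt (K / N)) / Real.sin (θ * Real.sqrt (K / N)))
  else if K * θ ^ 2 = 0 then ENNReal.ofReal t
  else ENNReal.ofReal (Real.sinh (t * θ * Real.sqrt (-K / N)) / Real.sinh (θ * Real.sqrt (-K / N)))

/-- The distortion coefficient `τ_{K,N}^{(t)}(θ) = t^{1/N} · σ_{K,N-1}^{(t)}(θ)^{1-1/N}` (`N > 1`). -/
def tauCoef (K N t θ : ℝ) : ℝ≥0∞ :=
  ENNReal.ofReal (t ^ (1 / N)) * sigmaCoef K (N - 1) t θ ^ (1 - 1 / N)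

section Dyn
variable {X : Type*} [MetricSpace X] [MeasurableSpace X] [MeasurableSpace C(unitInterval, X)]

/-- Evaluation map `e_t`. -/
def eval (t : unitInterval) : C(unitInterval, X) → X := fun γ => γ t

/-- A set of non-branching geodesics. -/
def IsNonBranchingSet (A : Set C(unitInterval, X)) : Prop :=
  ∀ γ₁ ∈ A, ∀ γ₂ ∈ A,
    (∃ tb : ℝ, 0 < tb ∧ tb < 1 ∧ ∀ s : unitInterval, (s : ℝ) ≤ tb → γ₁ s = γ₂ s) → γ₁ = γ₂

/-- `(X,d,m)` is essentially non-branching: every optimal dynamical plan between absolutely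
continuous marginals in `P₂` is concentrated on a set of non-branching geodesics. -/
def EssentiallyNonBranching (m : Measure X) : Prop :=
  ∀ μ0 μ1 : Measure X,
    IsProbabilityMeasure μ0 → IsProbabilityMeasure μ1 → μ0 ≪ m → μ1 ≪ m →
    FiniteMoment 2 μ0 → FiniteMoment 2 μ1 →
    ∀ ν : Measure C(unitInterval, X), IsProbabilityMeasure ν →
      ν {γ | ¬ IsCSG γ} = 0 →
      ν.map (eval 0) = μ0 → ν.map (eval 1) = μ1 →
      (∀ s t : unitInterval,
        Wp 2 (ν.map (eval s)) (ν.map (eval t))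
          = ENNReal.ofReal |(s : ℝ) - (t : ℝ)| * Wp 2 μ0 μ1) →
      (∫⁻ γ, edist (γ 0) (γ 1) ^ (2 : ℝ) ∂ν) = Wcost 2 μ0 μ1 →
      ∃ A : Set C(unitInterval, X), IsNonBranchingSet A ∧ ν Aᶜ = 0

/-- The condition `CD₁(K,N)`: displacement convexity of the Rényi entropies along dynamical
plans concentrated on constant speed geodesics realizing the `W₁`-distance. -/
def CDone (K N : ℝ) (m : Measure X) : Prop :=
  ∀ μ0 μ1 : Measure X,
    IsProbabilityMeasure μ0 → IsProbabilityMeasure μ1 → μ0 ≪ m → μ1 ≪ m →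
    FiniteMoment 1 μ0 → FiniteMoment 1 μ1 →
    ∃ π : Measure C(unitInterval, X), IsProbabilityMeasure π ∧
      π {γ | ¬ IsCSG γ} = 0 ∧
      (∫⁻ γ, edist (γ 0) (γ 1) ∂π) = Wp 1 μ0 μ1 ∧
      π.map (eval 0) = μ0 ∧ π.map (eval 1) = μ1 ∧
      (∀ t : unitInterval, π.map (eval t) ≪ m) ∧
      (∀ t : unitInterval, ∀ N', N ≤ N' →
        ∫⁻ γ, (tauCoef K N' (1 - (t : ℝ)) (dist (γ 0) (γ 1)) * (μ0.rnDeriv m (γ 0)) ^ (-(1 / N'))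
            + tauCoef K N' (t : ℝ) (dist (γ 0) (γ 1)) * (μ1.rnDeriv m (γ 1)) ^ (-(1 / N'))) ∂π
          ≤ ∫⁻ x, ((π.map (eval t)).rnDeriv m x) ^ (1 - 1 / N') ∂m)

end Dyn

/-- The ray-map setting: an `m`-measurable quotient map `f` for the equivalence relation
`R_u^b` with quotient set `Q ⊆ T_u^b` and quotient measure `q = f_♯(m⌞T_u^b)`, a
disintegration `m⌞T_u^b = ∫_Q m_α q(dα)` with `m_α` concentrated on the ray
`X_α = R_u^b(α)`, and a Borel ray map `g(α,·)` identifying each ray with a real interval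
along which `m_α` has density `h_α` with respect to Lebesgue measure. -/
structure RaySetting {X : Type*} [MetricSpace X] [MeasurableSpace X]
    (m : Measure X) (u : X → ℝ) where
  /-- the quotient map -/
  f : X → X
  /-- the quotient set `Q ⊆ T_u^b` -/
  Q : Set X
  /-- the quotient measure -/
  q : Measure X
  /-- the ray map -/
  g : X → ℝ → X
  /-- the domain interval of the ray through `α` -/
  dom : X → Set ℝ
  /-- the densities of the conditional measures -/
  h : X → ℝ → ℝ
  /-- the conditional measures -/
  mα : X → Measure X
  hfmeas : Measurable f
  hQsub : Q ⊆ Tub u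
  hfQ : ∀ x ∈ Tub u, f x ∈ Q
  hfid : ∀ α ∈ Q, f α = α
  hfquot : ∀ x ∈ Tub u, ∀ y ∈ Tub u, (f x = f y ↔ (x, y) ∈ Rub u)
  hq : q = (m.restrict (Tub u)).map f
  hdisint : ∀ s : Set X, MeasurableSet s → m.restrict (Tub u) s = ∫⁻ α, mα α s ∂q
  hprob : ∀ᵐ α ∂q, IsProbabilityMeasure (mα α)
  hdomconn : ∀ α ∈ Q, (dom α).OrdConnected
  hgmeas : ∀ α ∈ Q, Measurable (g α)
  hgisom : ∀ α ∈ Q, ∀ s ∈ dom α, ∀ t ∈ dom α, dist (g α s) (g α t) = |s - t|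
  hggamma : ∀ α ∈ Q, ∀ s ∈ dom α, ∀ t ∈ dom α, s ≤ t → (g α s, g α t) ∈ Gamma u
  hgonto : ∀ α ∈ Q, g α '' dom α = {y | (α, y) ∈ Rub u}
  hmα : ∀ α ∈ Q, mα α =
    ((volume.restrict (dom α)).withDensity (fun r => ENNReal.ofReal (h α r))).map (g α)

/-! ### Measurability of the transport set -/

/-- The compact box `K = ∏ [0, n i]` in Baire space is the intersection of the closed sets of
sequences bounded by `n` in their first `k` coordinates; every neighbourhood of `K` already
contains one of these sets, although they are not compact. -/
theorem exists_box_subset (n : ℕ → ℕ) (V : Set (ℕ → ℕ)) (hV : IsOpen V)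
    (hK : {x : ℕ → ℕ | ∀ i, x i ≤ n i} ⊆ V) :
    ∃ k, {x : ℕ → ℕ | ∀ i < k, x i ≤ n i} ⊆ V := by
  by_contra hcon
  push Not at hcon
  simp only [Set.not_subset] at hcon
  choose x hx hxV using hcon
  have hKc : IsCompact {x : ℕ → ℕ | ∀ i, x i ≤ n i} := by
    have h := isCompact_univ_pi (fun i => (Set.finite_Iic (n i)).isCompact)
    convert h using 1
    ext x; simp [Pi.le_def]
  let y : ℕ → ℕ → ℕ := fun k i => min (x k i) (n i)
  have hy : ∀ k, y k ∈ {x : ℕ → ℕ | ∀ i, x i ≤ n i} := fun k i => min_le_right _ _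
  obtain ⟨z, hz, φ, hφ, hlim⟩ := hKc.tendsto_subseq hy
  have hlim2 : Filter.Tendsto (x ∘ φ) Filter.atTop (nhds z) := by
    rw [tendsto_pi_nhds] at hlim ⊢
    intro i
    refine (hlim i).congr' ?_
    filter_upwards [Filter.eventually_gt_atTop i] with k hk
    have : i < φ k := lt_of_lt_of_le hk hφ.le_apply
    exact min_eq_left (hx (φ k) i this)
  have := (hlim2.eventually (hV.mem_nhds (hK hz))).exists
  obtain ⟨k, hk⟩ := this
  exact hxV _ hk

/-- Analytic sets have inner approximations by compact sets (Choquet's capacitability). -/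
theorem exists_compact_lt_of_analytic {X : Type*} [MetricSpace X] [MeasurableSpace X] [BorelSpace X]
    (μ : Measure X) [IsFiniteMeasure μ] {s : Set X} (hs : AnalyticSet s) {r : ℝ≥0∞}
    (hr : r < μ s) : ∃ K ⊆ s, IsCompact K ∧ r ≤ μ K := by
  rw [analyticSet_iff_exists_polishSpace_range] at hs
  obtain ⟨β, tβ, pβ, φ0, hφ0, rfl⟩ := hs
  have hne : Nonempty β := by
    by_contra h
    rw [not_nonempty_iff] at h
    rw [Set.range_eq_empty] at hr
    simp at hr
  obtain ⟨ψ, hψ, hψs⟩ := PolishSpace.exists_nat_nat_continuous_surjective β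
  let φ : (ℕ → ℕ) → X := φ0 ∘ ψ
  have hφ : Continuous φ := hφ0.comp hψ
  have hrange : Set.range φ0 = φ '' univ := by
    rw [image_univ, hψs.range_comp]
  rw [hrange] at hr ⊢
  -- bounding one more coordinate loses arbitrarily little measure, by continuity from below
  have step : ∀ (C : Set (ℕ → ℕ)) (k : ℕ), ∃ j : ℕ, r < μ (φ '' C) →
      r < μ (φ '' (C ∩ {x | x k ≤ j})) := by
    intro C k
    by_cases h : r < μ (φ '' C)
    · have hU : φ '' C = ⋃ j : ℕ, φ '' (C ∩ {x | x k ≤ j}) := by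
        rw [← image_iUnion, ← inter_iUnion]
        congr 1
        ext x
        simp only [mem_inter_iff, mem_iUnion, mem_ofPred_eq]
        exact ⟨fun hx => ⟨hx, _, le_rfl⟩, fun hx => hx.1⟩
      have hm : Monotone fun j : ℕ => φ '' (C ∩ {x | x k ≤ j}) := by
        intro a b hab
        exact image_mono (inter_subset_inter_right _ fun x hx => le_trans hx hab)
      rw [hU, hm.measure_iUnion, lt_iSup_iff] at h
      obtain ⟨j, hj⟩ := h
      exact ⟨j, fun _ => hj⟩
    · exact ⟨0, fun h' => absurd h' h⟩
  choose J hJ using step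
  let C : ℕ → Set (ℕ → ℕ) := fun k => Nat.rec univ (fun k C => C ∩ {x | x k ≤ J C k}) k
  have hC : ∀ k, C (k + 1) = C k ∩ {x | x k ≤ J (C k) k} := fun k => rfl
  let n : ℕ → ℕ := fun k => J (C k) k
  -- `n` bounds the coordinates one after the other, keeping the measure of the image above `r`
  have hCeq : ∀ k, C k = {x | ∀ i < k, x i ≤ n i} := by
    intro k
    induction k with
    | zero => simp [C]
    | succ k ih =>
      rw [hC]
      ext x
      rw [mem_inter_iff]
      constructor
      · rintro ⟨h1, h2⟩ i hi
        rcases Nat.lt_succ_iff_lt_or_eq.1 hi with h | h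
        · rw [ih] at h1; exact h1 i h
        · subst h; exact h2
      · intro h
        refine ⟨?_, h k (Nat.lt_succ_self k)⟩
        rw [ih]
        exact fun i hi => h i (Nat.lt_succ_of_lt hi)
  have hCr : ∀ k, r < μ (φ '' C k) := by
    intro k
    induction k with
    | zero => exact hr
    | succ k ih => exact hJ _ _ ih
  refine ⟨φ '' {x | ∀ i, x i ≤ n i}, image_mono (subset_univ _), ?_, ?_⟩
  · refine IsCompact.image ?_ hφ
    have h := isCompact_univ_pi (fun i => (Set.finite_Iic (n i)).isCompact)
    convert h using 1
    ext x; simp [Pi.le_def]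
  · rw [Set.measure_eq_iInf_isOpen]
    refine le_iInf₂ fun U hU => le_iInf fun hUo => ?_
    obtain ⟨k, hk⟩ := exists_box_subset n (φ ⁻¹' U) (hUo.preimage hφ) (image_subset_iff.1 hU)
    refine (hCr k).le.trans (measure_mono ?_)
    rw [hCeq]
    exact image_subset_iff.2 hk

/-- Analytic sets are universally measurable. -/
theorem analytic_nullMeasurable {X : Type*} [MetricSpace X] [MeasurableSpace X] [BorelSpace X]
    (μ : Measure X) [IsFiniteMeasure μ] {s : Set X} (hs : AnalyticSet s) :
    NullMeasurableSet s μ := by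
  by_cases h0 : μ s = 0
  · exact NullMeasurableSet.of_null h0
  obtain ⟨r, -, hr, hlim⟩ := exists_seq_strictMono_tendsto' (pos_iff_ne_zero.2 h0)
  choose K hKs hK hrK using fun n => exists_compact_lt_of_analytic μ hs (hr n).2
  have hm : MeasurableSet (⋃ n, K n) := MeasurableSet.iUnion fun n => (hK n).measurableSet
  have hsub : (⋃ n, K n) ⊆ s := iUnion_subset hKs
  have hge : μ s ≤ μ (⋃ n, K n) :=
    le_of_tendsto' hlim fun n => (hrK n).trans (measure_mono (subset_iUnion K n))
  have : (⋃ n, K n) =ᵐ[μ] s := ae_eq_of_subset_of_measure_ge hsub hge hm.nullMeasurableSet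
    (measure_ne_top _ _)
  exact hm.nullMeasurableSet.congr this

section
variable {X : Type*} [MetricSpace X]

theorem isClosed_Gamma {u : X → ℝ} (hu : Continuous u) : IsClosed (Gamma u) :=
  isClosed_eq (by fun_prop) (by fun_prop)

theorem isClosed_Ru {u : X → ℝ} (hu : Continuous u) : IsClosed (Ru u) :=
  (isClosed_Gamma hu).union ((isClosed_Gamma hu).preimage continuous_swap)

/-- `T_u`, `A_{+,u}` and `A_{-,u}` are built from projections of Borel sets, hence from analytic
sets. -/
theorem tub_nullMeasurable [CompleteSpace X] [SecondCountableTopology X]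
    [MeasurableSpace X] [BorelSpace X] (m : Measure X) [IsFiniteMeasure m]
    {u : X → ℝ} (hu : Continuous u) : NullMeasurableSet (Tub u) m := by
  have hT : NullMeasurableSet (Tu u) m := by
    apply analytic_nullMeasurable
    have h : MeasurableSet {p : X × X | p ∈ Ru u ∧ p.2 ≠ p.1} :=
      (isClosed_Ru hu).measurableSet.inter
        (measurableSet_eq_fun measurable_snd measurable_fst).compl
    have h2 := h.analyticSet.image_of_continuous continuous_fst
    convert h2 using 1
    ext x
    simp [Tu]
  have hG := (isClosed_Gamma hu).measurableSet
  have hR := (isClosed_Ru hu).measurableSet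
  have hP : NullMeasurableSet
      {x | ∃ z w, (x, z) ∈ Gamma u ∧ (x, w) ∈ Gamma u ∧ (z, w) ∉ Ru u} m := by
    apply analytic_nullMeasurable
    have h : MeasurableSet {p : X × X × X | (p.1, p.2.1) ∈ Gamma u ∧ (p.1, p.2.2) ∈ Gamma u ∧
        (p.2.1, p.2.2) ∉ Ru u} :=
      (measurableSet_preimage (by fun_prop) hG).inter
        ((measurableSet_preimage (by fun_prop) hG).inter
          (measurableSet_preimage (by fun_prop) hR).compl)
    have h2 := h.analyticSet.image_of_continuous continuous_fst
    convert h2 using 1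
    ext x
    simp
  have hM : NullMeasurableSet
      {x | ∃ z w, (z, x) ∈ Gamma u ∧ (w, x) ∈ Gamma u ∧ (z, w) ∉ Ru u} m := by
    apply analytic_nullMeasurable
    have h : MeasurableSet {p : X × X × X | (p.2.1, p.1) ∈ Gamma u ∧ (p.2.2, p.1) ∈ Gamma u ∧
        (p.2.1, p.2.2) ∉ Ru u} :=
      (measurableSet_preimage (by fun_prop) hG).inter
        ((measurableSet_preimage (by fun_prop) hG).inter
          (measurableSet_preimage (by fun_prop) hR).compl)
    have h2 := h.analyticSet.image_of_continuous continuous_fst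
    convert h2 using 1
    ext x
    simp
  exact hT.diff ((hT.inter hP).union (hT.inter hM))
end

/-! ### The density in the coordinates `(f, -u)` -/

/-- The integral of a possibly non-measurable function is a lower integral, so it determines an
almost everywhere lower bound. -/
theorem ae_le_of_lower_lintegral {α : Type*} [MeasurableSpace α] {μ : Measure α}
    [IsFiniteMeasure μ] {φ ψ : α → ℝ≥0∞} (hψ : Measurable ψ) (hfin : ∫⁻ a, ψ a ∂μ ≠ ∞)
    (h : ∀ B, MeasurableSet B → ∫⁻ a in B, φ a ∂μ = ∫⁻ a in B, ψ a ∂μ) : ψ ≤ᵐ[μ] φ := by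
  obtain ⟨φ', hφ', hle, heq⟩ := exists_measurable_le_lintegral_eq μ φ
  have hU := h univ MeasurableSet.univ
  simp only [Measure.restrict_univ] at hU
  have key : ∀ B, MeasurableSet B → ∫⁻ a in B, φ' a ∂μ = ∫⁻ a in B, ψ a ∂μ := by
    intro B hB
    have h1 : ∫⁻ a in B, φ' a ∂μ ≤ ∫⁻ a in B, ψ a ∂μ := (lintegral_mono hle).trans_eq (h B hB)
    have h2 : ∫⁻ a in Bᶜ, φ' a ∂μ ≤ ∫⁻ a in Bᶜ, ψ a ∂μ :=
      (lintegral_mono hle).trans_eq (h _ hB.compl)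
    have h3 := lintegral_add_compl φ' (μ := μ) hB
    have h4 := lintegral_add_compl ψ (μ := μ) hB
    refine le_antisymm h1 ?_
    have h5 : ∫⁻ a in Bᶜ, ψ a ∂μ ≠ ∞ :=
      ne_top_of_le_ne_top hfin (setLIntegral_le_lintegral _ _)
    refine (ENNReal.add_le_add_iff_right h5).1 ?_
    rw [h4, ← hU, heq, ← h3]
    exact add_le_add le_rfl h2
  have hae : φ' =ᵐ[μ] ψ :=
    ae_eq_of_forall_setLIntegral_eq_of_sigmaFinite hφ' hψ fun B hB _ => key B hB
  filter_upwards [hae] with a ha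
  rw [← ha]; exact hle a

section
variable {X : Type*} [MetricSpace X] [MeasurableSpace X] {m : Measure X} {u : X → ℝ}

theorem RaySetting.mem_rub (S : RaySetting m u) {α : X} (hα : α ∈ S.Q) {s : ℝ}
    (hs : s ∈ S.dom α) : (α, S.g α s) ∈ Rub u := by
  have : S.g α s ∈ S.g α '' S.dom α := ⟨s, hs, rfl⟩
  rw [S.hgonto α hα] at this
  exact this

theorem RaySetting.f_g (S : RaySetting m u) {α : X} (hα : α ∈ S.Q) {s : ℝ}
    (hs : s ∈ S.dom α) : S.f (S.g α s) = α := by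
  have h := S.mem_rub hα hs
  have h1 := (S.hfquot α h.2.1 _ h.2.2).2 h
  rw [← h1, S.hfid α hα]

/-- On each ray the coordinate `-u` is a translate of the parameter of the ray map. -/
theorem RaySetting.exists_coord (S : RaySetting m u) {α : X} (hα : α ∈ S.Q) :
    ∃ c : ℝ, ∀ s ∈ S.dom α, -u (S.g α s) = s - c := by
  have hself : α ∈ S.g α '' S.dom α := by
    rw [S.hgonto α hα]
    refine ⟨Or.inl ?_, S.hQsub hα, S.hQsub hα⟩
    simp [Gamma]
  obtain ⟨s0, hs0, -⟩ := hself
  refine ⟨s0 + u (S.g α s0), fun s hs => ?_⟩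
  rcases le_total s s0 with h | h
  · have h1 : u (S.g α s) - u (S.g α s0) = dist (S.g α s) (S.g α s0) :=
      S.hggamma α hα s hs s0 hs0 h
    rw [S.hgisom α hα s hs s0 hs0, abs_of_nonpos (by linarith)] at h1
    linarith
  · have h1 : u (S.g α s0) - u (S.g α s) = dist (S.g α s0) (S.g α s) :=
      S.hggamma α hα s0 hs0 s hs h
    rw [S.hgisom α hα s0 hs0 s hs, abs_of_nonpos (by linarith)] at h1
    linarith

theorem RaySetting.map_coord (S : RaySetting m u) (hu : Measurable u) {α : X} (hα : α ∈ S.Q)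
    {c : ℝ} (hc : ∀ s ∈ S.dom α, -u (S.g α s) = s - c) :
    (S.mα α).map (fun x => -u x) =
      ((volume.restrict (S.dom α)).withDensity
        (fun r => ENNReal.ofReal (S.h α r))).map (fun s => s - c) := by
  rw [S.hmα α hα, Measure.map_map (by fun_prop) (S.hgmeas α hα)]
  apply Measure.map_congr
  have : ∀ᵐ s ∂(volume.restrict (S.dom α)), s ∈ S.dom α :=
    ae_restrict_mem (S.hdomconn α hα).measurableSet
  exact (withDensity_absolutelyContinuous _ _).ae_le (by
    filter_upwards [this] with s hs
    exact hc s hs)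

theorem RaySetting.map_coord_eq_withDensity (S : RaySetting m u) (hu : Measurable u) {α : X}
    (hα : α ∈ S.Q) {c : ℝ} (hc : ∀ s ∈ S.dom α, -u (S.g α s) = s - c) :
    (S.mα α).map (fun x => -u x) = volume.withDensity
      (fun r => (S.dom α).indicator (fun s => ENNReal.ofReal (S.h α s)) (r + c)) := by
  rw [S.map_coord hu hα hc]
  have hd := (S.hdomconn α hα).measurableSet
  rw [← withDensity_indicator hd]
  ext E hE
  rw [Measure.map_apply (by fun_prop) hE,
    withDensity_apply _ (measurableSet_preimage (by fun_prop) hE), withDensity_apply _ hE]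
  have hmp : MeasurePreserving (fun s : ℝ => s - c) volume volume :=
    measurePreserving_sub_right volume c
  have hemb : MeasurableEmbedding (fun s : ℝ => s - c) := (MeasurableEquiv.subRight c).measurableEmbedding
  have := hmp.setLIntegral_comp_preimage_emb hemb
    (fun r => (S.dom α).indicator (fun s => ENNReal.ofReal (S.h α s)) (r + c)) E
  rw [← this]
  simp

theorem RaySetting.ae_f (S : RaySetting m u) [BorelSpace X] {α : X} (hα : α ∈ S.Q) :
    ∀ᵐ x ∂(S.mα α), S.f x = α := by
  have hms : MeasurableSet {x | S.f x = α} := S.hfmeas (measurableSet_singleton α)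
  rw [S.hmα α hα, ae_map_iff (S.hgmeas α hα).aemeasurable hms]
  have : ∀ᵐ s ∂(volume.restrict (S.dom α)), s ∈ S.dom α :=
    ae_restrict_mem (S.hdomconn α hα).measurableSet
  exact (withDensity_absolutelyContinuous _ _).ae_le (by
    filter_upwards [this] with s hs
    exact S.f_g hα hs)
end

/-- Disintegration over a measurable set of rays, in the coordinates `x ↦ (f x, -u x)`. -/
theorem RaySetting.disint_coord {X : Type*} [MetricSpace X] [SecondCountableTopology X]
    [MeasurableSpace X] [BorelSpace X]
    {m : Measure X} [IsProbabilityMeasure m] {u : X → ℝ} (hu : Measurable u)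
    (S : RaySetting m u) {Qb : Set X} (hQb : MeasurableSet Qb) (hQbsub : Qb ⊆ S.Q)
    {E : Set (X × ℝ)} (hE : MeasurableSet E) :
    (m.restrict (Tub u)) ((fun x => (S.f x, -u x)) ⁻¹' E ∩ S.f ⁻¹' Qb)
      = ∫⁻ α in Qb, (S.mα α).map (fun x => -u x) (Prod.mk α ⁻¹' E) ∂S.q := by
  have hF : Measurable (fun x => (S.f x, -u x)) := S.hfmeas.prodMk hu.neg
  have hqf : IsFiniteMeasure S.q := by rw [S.hq]; infer_instance
  -- the rays outside `Qb` do not charge `f ⁻¹' Qb`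
  have h0 : ∫⁻ α in Qbᶜ, S.mα α (S.f ⁻¹' Qb) ∂S.q = 0 := by
    have h1 := S.hdisint _ (S.hfmeas hQb)
    rw [← lintegral_add_compl _ hQb, ← Measure.map_apply S.hfmeas hQb, ← S.hq] at h1
    have h2 : ∫⁻ α in Qb, S.mα α (S.f ⁻¹' Qb) ∂S.q = S.q Qb := by
      rw [← setLIntegral_one]
      apply lintegral_congr_ae
      filter_upwards [ae_restrict_mem hQb, ae_restrict_of_ae S.hprob] with α hα hp
      rw [← hp.measure_univ]
      apply measure_congr
      filter_upwards [S.ae_f (hQbsub hα)] with x hx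
      apply propext
      change S.f x ∈ Qb ↔ True
      simp [hx, hα]
    rw [h2] at h1
    have : S.q Qb + 0 = S.q Qb + ∫⁻ α in Qbᶜ, S.mα α (S.f ⁻¹' Qb) ∂S.q := by rw [← h1, add_zero]
    exact ((ENNReal.add_right_inj (measure_ne_top _ _)).1 this).symm
  rw [S.hdisint _ ((hF hE).inter (S.hfmeas hQb)), ← lintegral_add_compl _ hQb]
  have h3 : ∫⁻ α in Qbᶜ, S.mα α ((fun x => (S.f x, -u x)) ⁻¹' E ∩ S.f ⁻¹' Qb) ∂S.q = 0 :=
    le_antisymm (h0 ▸ lintegral_mono fun α => measure_mono inter_subset_right) bot_le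
  rw [h3, add_zero]
  apply setLIntegral_congr_fun hQb
  intro α hα
  simp only
  rw [Measure.map_apply (by fun_prop) (measurable_prodMk_left hE)]
  apply measure_congr
  filter_upwards [S.ae_f (hQbsub hα)] with x hx
  apply propext
  change ((S.f x, -u x) ∈ E ∧ S.f x ∈ Qb) ↔ (α, -u x) ∈ E
  simp [hx, hα]

/-- In the coordinates `(f, -u)` the measure `m` has, over the rays in `Qb`, a jointly measurable
density `H`, which on almost every ray is a translate of `h α`. No joint measurability of
`g` and `h` is needed: the coordinate `-u` is a translate of the parameter of `g α`. -/
theorem RaySetting.exists_density {X : Type*} [MetricSpace X] [CompleteSpace X]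
    [SecondCountableTopology X] [MeasurableSpace X] [BorelSpace X]
    {m : Measure X} [IsProbabilityMeasure m] {u : X → ℝ} (hu : Continuous u)
    (S : RaySetting m u) (hcont : ∀ᵐ α ∂S.q, ContinuousOn (S.h α) (S.dom α))
    {Qb : Set X} (hQb : MeasurableSet Qb) (hQbsub : Qb ⊆ S.Q) :
    ∃ (D : Set X) (H : X × ℝ → ℝ≥0∞), MeasurableSet D ∧ D ⊆ Tub u ∧ D ⊆ S.f ⁻¹' Qb ∧
      m ((Tub u ∩ S.f ⁻¹' Qb) \ D) = 0 ∧ Measurable H ∧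
      (m.restrict D).map (fun x => (S.f x, -u x))
        = ((S.q.restrict Qb).prod volume).withDensity H ∧
      ∀ᵐ α ∂(S.q.restrict Qb), ∃ c : ℝ, ∀ᵐ r : ℝ,
        H (α, r) = (S.dom α).indicator (fun s => ENNReal.ofReal (S.h α s)) (r + c) := by
  have hum : Measurable u := hu.measurable
  have hqf : IsFiniteMeasure S.q := by rw [S.hq]; infer_instance
  have hF : Measurable (fun x => (S.f x, -u x)) := S.hfmeas.prodMk hum.neg
  have hT := tub_nullMeasurable m hu
  have hTQ : NullMeasurableSet (Tub u ∩ S.f ⁻¹' Qb) m :=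
    hT.inter (S.hfmeas hQb).nullMeasurableSet
  obtain ⟨D, hDsub, hD, hDae⟩ := hTQ.exists_measurable_subset_ae_eq
  set M := (m.restrict D).map (fun x => (S.f x, -u x)) with hM
  set ν : X → Measure ℝ := fun α => (S.mα α).map (fun x => -u x) with hν
  have hMapply : ∀ E, MeasurableSet E → M E = ∫⁻ α in Qb, ν α (Prod.mk α ⁻¹' E) ∂S.q := by
    intro E hE
    rw [hM, Measure.map_apply hF hE, ← S.disint_coord hum hQb hQbsub hE,
      Measure.restrict_congr_set hDae, Measure.restrict_apply (hF hE),
      Measure.restrict_apply ((hF hE).inter (S.hfmeas hQb))]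
    congr 1
    ext x
    simp only [mem_inter_iff]
    tauto
  have hνac : ∀ α ∈ Qb, ν α ≪ volume := by
    intro α hα
    obtain ⟨c, hc⟩ := S.exists_coord (hQbsub hα)
    simp only [hν]
    rw [S.map_coord_eq_withDensity hum (hQbsub hα) hc]
    exact withDensity_absolutelyContinuous _ _
  have hMac : M ≪ (S.q.restrict Qb).prod volume := by
    refine Measure.AbsolutelyContinuous.mk fun E hE h0 => ?_
    rw [Measure.measure_prod_null hE] at h0
    rw [hMapply E hE, ← lintegral_zero (μ := S.q.restrict Qb)]
    apply lintegral_congr_ae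
    filter_upwards [h0, ae_restrict_mem hQb] with α h1 h2
    exact hνac α h2 h1
  set H := M.rnDeriv ((S.q.restrict Qb).prod volume) with hH
  have hHm : Measurable H := Measure.measurable_rnDeriv _ _
  have hMH : ((S.q.restrict Qb).prod volume).withDensity H = M :=
    Measure.withDensity_rnDeriv_eq _ _ hMac
  have hMprod : ∀ B I, MeasurableSet B → MeasurableSet I →
      ∫⁻ α in B, ν α I ∂(S.q.restrict Qb)
        = ∫⁻ α in B, (∫⁻ r in I, H (α, r)) ∂(S.q.restrict Qb) := by
    intro B I hB hI
    have h1 := hMapply (B ×ˢ I) (hB.prod hI)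
    rw [← hMH, withDensity_apply _ (hB.prod hI), setLIntegral_prod _ hHm.aemeasurable] at h1
    rw [h1, ← lintegral_indicator hB]
    apply lintegral_congr
    intro α
    by_cases hα : α ∈ B
    · simp [hα]
    · simp [hα]
  have hIm : ∀ I : Set ℝ, Measurable fun α => ∫⁻ r in I, H (α, r) := fun I =>
    Measurable.lintegral_prod_right' (f := H) hHm
  have hqbprob : ∀ᵐ α ∂(S.q.restrict Qb), ν α univ = 1 := by
    filter_upwards [ae_restrict_of_ae S.hprob] with α hα
    simp only [hν]
    rw [Measure.map_apply (by fun_prop) MeasurableSet.univ]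
    simp
  have hfin : ∀ I, MeasurableSet I →
      ∫⁻ α, (∫⁻ r in I, H (α, r)) ∂(S.q.restrict Qb) ≠ ∞ := by
    intro I hI
    have := hMprod univ I MeasurableSet.univ hI
    simp only [Measure.restrict_univ] at this
    rw [← this]
    refine ne_top_of_le_ne_top (b := ∫⁻ α, 1 ∂(S.q.restrict Qb)) ?_ (lintegral_mono_ae ?_)
    · simp
    · filter_upwards [hqbprob] with α hα
      rw [← hα]; exact measure_mono (subset_univ _)
  -- `α ↦ ν α I` need not be measurable, so equality of integrals only gives one inequality;
  -- the opposite one follows from the same bound on `Iᶜ` and the equality of the total masses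
  have hle : ∀ I, MeasurableSet I →
      ∀ᵐ α ∂(S.q.restrict Qb), ∫⁻ r in I, H (α, r) ≤ ν α I := fun I hI =>
    ae_le_of_lower_lintegral (hIm I) (hfin I hI) fun B hB => hMprod B I hB hI
  have htot : ∀ᵐ α ∂(S.q.restrict Qb), ∫⁻ r, H (α, r) = 1 := by
    have h1 := hle univ MeasurableSet.univ
    have h2 := hMprod univ univ MeasurableSet.univ MeasurableSet.univ
    simp only [Measure.restrict_univ] at h1 h2
    rw [lintegral_congr_ae hqbprob] at h2
    have h3 : (fun α => ∫⁻ r, H (α, r)) ≤ᵐ[S.q.restrict Qb] fun _ => 1 := by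
      filter_upwards [h1, hqbprob] with α h h'
      rw [← h']; exact h
    refine ae_eq_of_ae_le_of_lintegral_le h3 ?_ aemeasurable_const h2.le
    rw [← h2]; simp
  have heq : ∀ I, MeasurableSet I →
      ∀ᵐ α ∂(S.q.restrict Qb), ν α I = ∫⁻ r in I, H (α, r) := by
    intro I hI
    filter_upwards [hle I hI, hle _ hI.compl, htot, hqbprob] with α h1 h2 h3 h4
    rw [← lintegral_add_compl _ hI] at h3
    rw [← measure_add_measure_compl hI] at h4
    refine le_antisymm ?_ h1
    have h5 : ∫⁻ r in Iᶜ, H (α, r) ≠ ∞ := ne_top_of_le_ne_top one_ne_top (h3 ▸ le_add_self)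
    refine (ENNReal.add_le_add_iff_right h5).1 ?_
    rw [h3, ← h4]
    exact add_le_add le_rfl h2
  have hall : ∀ᵐ α ∂(S.q.restrict Qb), ∀ a b : ℚ,
      ν α (Ioo (a:ℝ) b) = ∫⁻ r in Ioo (a:ℝ) b, H (α, r) := by
    rw [ae_all_iff]; intro a
    rw [ae_all_iff]; intro b
    exact heq _ measurableSet_Ioo
  refine ⟨D, H, hD, fun x hx => (hDsub hx).1, fun x hx => (hDsub hx).2, ?_, hHm, hMH.symm, ?_⟩
  · exact ae_le_set.1 hDae.symm.le
  · filter_upwards [hall, hqbprob, htot, ae_restrict_mem hQb, ae_restrict_of_ae hcont]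
      with α h1 h2 h3 hα hc
    obtain ⟨c, hcc⟩ := S.exists_coord (hQbsub hα)
    refine ⟨c, ?_⟩
    have hfinν : IsFiniteMeasure (ν α) := ⟨by rw [h2]; exact one_lt_top⟩
    have hνeq : ν α = volume.withDensity (fun r => H (α, r)) := by
      apply Real.measure_ext_Ioo_rat
      intro a b
      rw [h1, withDensity_apply _ measurableSet_Ioo]
    have hν2 := S.map_coord_eq_withDensity hum (hQbsub hα) hcc
    have hν3 : ν α = _ := hν2
    rw [hνeq] at hν3
    have hd := (S.hdomconn α (hQbsub hα)).measurableSet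
    have hhm : AEMeasurable
        (fun r => (S.dom α).indicator (fun s => ENNReal.ofReal (S.h α s)) (r + c)) volume := by
      have h4 : AEMeasurable ((S.dom α).indicator (fun s => ENNReal.ofReal (S.h α s))) volume :=
        (aemeasurable_indicator_iff hd).2 (hc.aemeasurable hd).ennreal_ofReal
      exact h4.comp_quasiMeasurePreserving
        (measurePreserving_add_right volume c).quasiMeasurePreserving
    refine (withDensity_eq_iff (by fun_prop) hhm ?_).1 hν3
    rw [h3]; exact one_ne_top

/-! ### Geodesics in rays, couplings along rays and Jensen's inequality -/

section
variable {X : Type*} [MetricSpace X] [MeasurableSpace X] {m : Measure X} {u : X → ℝ}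

theorem RaySetting.gamma_of_f_eq (S : RaySetting m u) {x y : X} (hx : x ∈ Tub u) (hy : y ∈ Tub u)
    (hf : S.f x = S.f y) (hle : -u x ≤ -u y) : (x, y) ∈ Gamma u := by
  have h := (S.hfquot x hx y hy).1 hf
  rcases h.1 with h | h
  · exact h
  · have h1 : u y - u x = dist y x := h
    have h2 : dist y x = 0 := le_antisymm (by linarith) dist_nonneg
    change u x - u y = dist x y
    rw [dist_comm, h2]; linarith

theorem RaySetting.rub_f (S : RaySetting m u) {x : X} (hx : x ∈ Tub u) : (S.f x, x) ∈ Rub u := by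
  have hQ := S.hfQ x hx
  exact (S.hfquot _ (S.hQsub hQ) x hx).1 (S.hfid _ hQ)

theorem RaySetting.dist_f (S : RaySetting m u) {x : X} (hx : x ∈ Tub u) :
    dist x (S.f x) = |u x - u (S.f x)| := by
  rcases (S.rub_f hx).1 with h | h
  · have h1 : u (S.f x) - u x = dist (S.f x) x := h
    rw [dist_comm, ← h1, abs_sub_comm, abs_of_nonneg (h1 ▸ dist_nonneg)]
  · have h1 : u x - u (S.f x) = dist x (S.f x) := h
    rw [← h1, abs_of_nonneg (h1 ▸ dist_nonneg)]

/-- A geodesic joining two points of the same non-branched ray stays in this ray: otherwise its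
initial point would be a forward branching point. -/
theorem RaySetting.geodesic_mem (S : RaySetting m u) (hu : LipschitzWith 1 u)
    {γ : C(unitInterval, X)} (hγ : IsCSG γ) (h0 : γ 0 ∈ Tub u) (h1 : γ 1 ∈ Tub u)
    (hG : (γ 0, γ 1) ∈ Gamma u) (t : unitInterval) :
    γ t ∈ Tub u ∧ S.f (γ t) = S.f (γ 0) ∧ -u (γ t) = (1 - t) * (-u (γ 0)) + t * (-u (γ 1)) := by
  have hG' : u (γ 0) - u (γ 1) = dist (γ 0) (γ 1) := hG
  have hlip : ∀ x y, u x - u y ≤ dist x y := fun x y => by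
    have := hu.dist_le_mul x y
    rw [Real.dist_eq] at this
    simp only [NNReal.coe_one, one_mul] at this
    exact (le_abs_self _).trans this
  have ht0 : (0:ℝ) ≤ t := t.2.1
  have ht1 : (t:ℝ) ≤ 1 := t.2.2
  have d0 : dist (γ 0) (γ t) = t * dist (γ 0) (γ 1) := by
    have := hγ 0 t
    simpa [abs_of_nonneg ht0] using this
  have d1 : dist (γ t) (γ 1) = (1 - t) * dist (γ 0) (γ 1) := by
    have := hγ t 1
    rw [abs_of_nonpos (by simpa using ht1)] at this
    simpa using this
  have e0 : u (γ 0) - u (γ t) = dist (γ 0) (γ t) := by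
    have := hlip (γ 0) (γ t)
    have := hlip (γ t) (γ 1)
    nlinarith
  have huv : -u (γ t) = (1 - t) * (-u (γ 0)) + t * (-u (γ 1)) := by
    rw [d0, ← hG'] at e0
    linarith
  set α := S.f (γ 0) with hα
  have hαQ : α ∈ S.Q := S.hfQ _ h0
  have hf01 : S.f (γ 0) = S.f (γ 1) := (S.hfquot _ h0 _ h1).2 ⟨Or.inl hG, h0, h1⟩
  have hr0 : γ 0 ∈ S.g α '' S.dom α := by rw [S.hgonto α hαQ]; exact S.rub_f h0
  have hr1 : γ 1 ∈ S.g α '' S.dom α := by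
    rw [S.hgonto α hαQ, hα, hf01]; exact S.rub_f h1
  obtain ⟨s0, hs0, hg0⟩ := hr0
  obtain ⟨s1, hs1, hg1⟩ := hr1
  obtain ⟨c, hc⟩ := S.exists_coord hαQ
  have hc0 := hc s0 hs0
  have hc1 := hc s1 hs1
  rw [hg0] at hc0
  rw [hg1] at hc1
  have hle : s0 ≤ s1 := by
    have : (0:ℝ) ≤ dist (γ 0) (γ 1) := dist_nonneg
    linarith
  have hst : (1 - t) * s0 + t * s1 ∈ Icc s0 s1 := by
    constructor <;> nlinarith
  have hsd := (S.hdomconn α hαQ).out hs0 hs1 hst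
  have hcy := hc _ hsd
  have hrub := S.mem_rub hαQ hsd
  have hfy := S.f_g hαQ hsd
  have hGy := S.hggamma α hαQ _ hs0 _ hsd hst.1
  rw [hg0] at hGy
  -- `γ t` and `y` are both reached from `γ 0` along `Γ_u` at the same level of `u`
  set y := S.g α ((1 - t) * s0 + t * s1)
  have huy : u y = u (γ t) := by
    have : -u y = -u (γ t) := by rw [hcy, huv, hc0, hc1]; ring
    linarith
  have hyeq : γ t = y := by
    by_contra hne
    have hd : 0 < dist (γ t) y := dist_pos.2 hne
    apply h0.2
    left
    refine ⟨h0.1, γ t, y, e0, hGy, ?_⟩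
    rintro (h | h)
    · have : u (γ t) - u y = dist (γ t) y := h
      linarith
    · have : u y - u (γ t) = dist y (γ t) := h
      rw [dist_comm] at this
      linarith
  rw [hyeq]
  refine ⟨hrub.2.2, hfy, ?_⟩
  rw [huy]; exact huv
end

/-- If `m⌞D` has density `H` in the coordinates `F`, then the normalized restriction of the
reference measure to `C` lifts to a probability measure on `D`, with density `(ν C * H)⁻¹`. -/
theorem exists_lift {X Y : Type*} [MeasurableSpace X] [MeasurableSpace Y]
    (m : Measure X) [IsFiniteMeasure m] {D : Set X} (hD : MeasurableSet D) {F : X → Y}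
    (hF : Measurable F) (ν : Measure Y) {H : Y → ℝ≥0∞} (hH : Measurable H)
    (hmap : (m.restrict D).map F = ν.withDensity H) {C : Set Y} (hC : MeasurableSet C)
    (hC0 : ν C ≠ 0) (hCtop : ν C ≠ ∞) (A : ℝ≥0∞)
    (hHC : ∀ᵐ p ∂(ν.restrict C), A ≤ H p ∧ H p ≠ 0 ∧ H p ≠ ∞) (N : ℝ) (hN : 0 < N) :
    ∃ μ : Measure X, IsProbabilityMeasure μ ∧ μ ≪ m ∧ μ.map F = (ν C)⁻¹ • ν.restrict C ∧
      (∀ᵐ x ∂μ, x ∈ D) ∧ (∀ᵐ x ∂μ, F x ∈ C) ∧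
      ∀ᵐ x ∂μ, (ν C * A) ^ (1 / N) ≤ (μ.rnDeriv m x) ^ (-(1 / N)) := by
  let ρ : Y → ℝ≥0∞ := C.indicator fun p => (ν C * H p)⁻¹
  have hρ : Measurable ρ := Measurable.indicator (by fun_prop) hC
  let μ : Measure X := (m.restrict D).withDensity (fun x => ρ (F x))
  have hρF : Measurable fun x => ρ (F x) := hρ.comp hF
  have hmapμ : μ.map F = (ν C)⁻¹ • ν.restrict C := by
    ext E hE
    rw [Measure.map_apply hF hE, withDensity_apply _ (hF hE), ← setLIntegral_map hE hρ hF, hmap,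
      setLIntegral_withDensity_eq_setLIntegral_mul _ hH hρ hE, Measure.smul_apply, smul_eq_mul,
      Measure.restrict_apply hE, ← setLIntegral_const]
    have : ∀ p, (H * ρ) p = C.indicator (fun p => H p * (ν C * H p)⁻¹) p := by
      intro p
      by_cases hp : p ∈ C <;> simp [ρ, hp]
    simp only [this]
    rw [setLIntegral_indicator hC, inter_comm]
    have hae : ∀ᵐ p ∂(ν.restrict (E ∩ C)), A ≤ H p ∧ H p ≠ 0 ∧ H p ≠ ∞ :=
      ae_restrict_of_ae_restrict_of_subset inter_subset_right hHC
    apply lintegral_congr_ae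
    filter_upwards [hae] with p hp
    rw [ENNReal.mul_inv (Or.inl hC0) (Or.inl hCtop), mul_comm, mul_assoc,
      ENNReal.inv_mul_cancel hp.2.1 hp.2.2, mul_one]
  have hμ : IsProbabilityMeasure μ := by
    constructor
    have : μ univ = μ.map F univ := by rw [Measure.map_apply hF MeasurableSet.univ, preimage_univ]
    rw [this, hmapμ]
    simp [ENNReal.inv_mul_cancel hC0 hCtop]
  have hμD : μ ≪ m.restrict D := withDensity_absolutelyContinuous _ _
  have hμm : μ ≪ m := hμD.trans Measure.absolutelyContinuous_restrict
  have hprop : ∀ (P : Y → Prop), MeasurableSet {p | P p} → (∀ᵐ p ∂(ν.restrict C), P p) →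
      ∀ᵐ x ∂μ, P (F x) := by
    intro P hP h
    rw [← ae_map_iff hF.aemeasurable hP, hmapμ]
    exact Measure.ae_smul_measure h _
  have hmemD : ∀ᵐ x ∂μ, x ∈ D := hμD.ae_le (ae_restrict_mem hD)
  have hmemC : ∀ᵐ x ∂μ, F x ∈ C := hprop (· ∈ C) hC (ae_restrict_mem hC)
  refine ⟨μ, hμ, hμm, hmapμ, hmemD, hmemC, ?_⟩
  have hrn : μ.rnDeriv m =ᵐ[m] D.indicator (fun x => ρ (F x)) := by
    have : μ = m.withDensity (D.indicator (fun x => ρ (F x))) := by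
      rw [withDensity_indicator hD]
    rw [this]
    exact Measure.rnDeriv_withDensity m (hρF.indicator hD)
  have hA : ∀ᵐ x ∂μ, A ≤ H (F x) :=
    hprop (fun p => A ≤ H p) (measurableSet_le measurable_const hH) (hHC.mono fun p hp => hp.1)
  filter_upwards [hmemD, hmemC, hμm.ae_le hrn, hA] with x h1 h2 h3 h4
  rw [h3, indicator_of_mem h1]
  simp only [ρ, indicator_of_mem h2]
  rw [ENNReal.rpow_neg, ENNReal.inv_rpow, inv_inv]
  exact ENNReal.rpow_le_rpow (by gcongr) (by positivity)

/-- Two measures with the same image under `f` have a coupling along the fibres of `f`. -/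
theorem exists_fiber_coupling {X : Type*} [MetricSpace X] [CompleteSpace X]
    [SecondCountableTopology X] [MeasurableSpace X] [BorelSpace X] {f : X → X} (hf : Measurable f)
    (μ0 μ1 : Measure X) [IsProbabilityMeasure μ0] [IsProbabilityMeasure μ1]
    (h : μ0.map f = μ1.map f) :
    ∃ κ : Measure (X × X), IsCoupling κ μ0 μ1 ∧ ∀ᵐ z ∂κ, f z.1 = f z.2 := by
  have hne : Nonempty X := by
    by_contra hc
    rw [not_nonempty_iff] at hc
    have := measure_univ (μ := μ0)
    rw [Measure.eq_zero_of_isEmpty μ0] at this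
    simp at this
  have hg : Measurable fun x => (f x, x) := hf.prodMk measurable_id
  set ρ0 := μ0.map (fun x => (f x, x)) with hρ0
  set ρ1 := μ1.map (fun x => (f x, x)) with hρ1
  have hp0 : IsProbabilityMeasure ρ0 := Measure.isProbabilityMeasure_map hg.aemeasurable
  have hp1 : IsProbabilityMeasure ρ1 := Measure.isProbabilityMeasure_map hg.aemeasurable
  have f0 : ρ0.fst = μ0.map f := Measure.fst_map_prodMk measurable_id
  have f1 : ρ1.fst = μ0.map f := by rw [h]; exact Measure.fst_map_prodMk measurable_id
  set P := μ0.map f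
  have hP : IsProbabilityMeasure P := Measure.isProbabilityMeasure_map hf.aemeasurable
  have d0 := ρ0.disintegrate ρ0.condKernel
  have d1 := ρ1.disintegrate ρ1.condKernel
  rw [f0] at d0
  rw [f1] at d1
  set Λ := P.compProd (ρ0.condKernel.prod ρ1.condKernel) with hΛ
  have m0 : Λ.map (Prod.map id Prod.fst) = ρ0 := by
    rw [hΛ, ← Measure.compProd_map measurable_fst, ← ProbabilityTheory.Kernel.fst_eq,
      ProbabilityTheory.Kernel.fst_prod, d0]
  have m1 : Λ.map (Prod.map id Prod.snd) = ρ1 := by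
    rw [hΛ, ← Measure.compProd_map measurable_snd, ← ProbabilityTheory.Kernel.snd_eq,
      ProbabilityTheory.Kernel.snd_prod, d1]
  have s0 : ρ0.map Prod.snd = μ0 := by
    rw [hρ0, Measure.map_map measurable_snd hg]
    exact Measure.map_id
  have s1 : ρ1.map Prod.snd = μ1 := by
    rw [hρ1, Measure.map_map measurable_snd hg]
    exact Measure.map_id
  have hset : MeasurableSet {p : X × X | f p.2 = p.1} :=
    measurableSet_eq_fun (hf.comp measurable_snd) measurable_fst
  have a0 : ∀ᵐ p ∂ρ0, f p.2 = p.1 := by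
    rw [hρ0, ae_map_iff hg.aemeasurable hset]
    simp
  have a1 : ∀ᵐ p ∂ρ1, f p.2 = p.1 := by
    rw [hρ1, ae_map_iff hg.aemeasurable hset]
    simp
  have q0 : Measurable (Prod.map id Prod.fst : X × X × X → X × X) := by fun_prop
  have q1 : Measurable (Prod.map id Prod.snd : X × X × X → X × X) := by fun_prop
  rw [← m0, ae_map_iff q0.aemeasurable hset] at a0
  rw [← m1, ae_map_iff q1.aemeasurable hset] at a1
  refine ⟨Λ.map Prod.snd, ⟨?_, ?_⟩, ?_⟩
  · rw [Measure.map_map measurable_fst measurable_snd, ← s0, ← m0,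
      Measure.map_map measurable_snd q0]
    rfl
  · rw [Measure.map_map measurable_snd measurable_snd, ← s1, ← m1,
      Measure.map_map measurable_snd q1]
    rfl
  · have hset2 : MeasurableSet {z : X × X | f z.1 = f z.2} :=
      measurableSet_eq_fun (hf.comp measurable_fst) (hf.comp measurable_snd)
    rw [ae_map_iff measurable_snd.aemeasurable hset2]
    filter_upwards [a0, a1] with p h0 h1
    exact h0.trans h1.symm

/-- Jensen's inequality for the Rényi entropy of a measure concentrated on `E`. -/
theorem renyi_le {X : Type*} [MeasurableSpace X] (m μ : Measure X) [IsFiniteMeasure m]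
    [IsProbabilityMeasure μ] (hμ : μ ≪ m) {E : Set X} (hE : MeasurableSet E)
    (hμE : ∀ᵐ x ∂μ, x ∈ E) {N : ℝ} (hN : 1 < N) :
    ∫⁻ x, (μ.rnDeriv m x) ^ (1 - 1 / N) ∂m ≤ (m E) ^ (1 / N) := by
  have hN0 : 0 < N := by linarith
  have hp0 : 0 < 1 - 1 / N := by
    rw [sub_pos, div_lt_one hN0]; exact hN
  have hc : (1 - 1 / N)⁻¹.HolderConjugate N := by
    rw [Real.holderConjugate_iff]
    refine ⟨(one_lt_inv₀ hp0).2 ?_, ?_⟩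
    · have : 0 < 1 / N := by positivity
      linarith
    · rw [inv_inv]; ring
  have hint : ∫⁻ x, μ.rnDeriv m x ∂m ≤ 1 := by
    rw [Measure.lintegral_rnDeriv hμ]; simp
  have hzero : ∀ᵐ x ∂m, x ∉ E → μ.rnDeriv m x = 0 := by
    have h1 : ∫⁻ x in Eᶜ, μ.rnDeriv m x ∂m = 0 := by
      rw [Measure.setLIntegral_rnDeriv hμ]
      exact hμE
    rw [lintegral_eq_zero_iff (Measure.measurable_rnDeriv _ _)] at h1
    rw [Filter.EventuallyEq, ae_restrict_iff' hE.compl] at h1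
    exact h1
  calc ∫⁻ x, (μ.rnDeriv m x) ^ (1 - 1 / N) ∂m
      = ∫⁻ x, ((fun x => (μ.rnDeriv m x) ^ (1 - 1 / N)) * E.indicator (1 : X → ℝ≥0∞)) x ∂m := by
        apply lintegral_congr_ae
        filter_upwards [hzero] with x hx
        by_cases hxE : x ∈ E
        · simp [hxE]
        · simp only [Pi.mul_apply, indicator_of_notMem hxE, mul_zero]
          rw [hx hxE, ENNReal.zero_rpow_of_pos hp0]
    _ ≤ (∫⁻ x, ((μ.rnDeriv m x) ^ (1 - 1 / N)) ^ (1 - 1 / N)⁻¹ ∂m) ^ (1 / (1 - 1 / N)⁻¹) *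
        (∫⁻ x, (E.indicator (1 : X → ℝ≥0∞) x) ^ N ∂m) ^ (1 / N) :=
        ENNReal.lintegral_mul_le_Lp_mul_Lq m hc
          ((Measure.measurable_rnDeriv _ _).pow_const _).aemeasurable
          (measurable_one.indicator hE).aemeasurable
    _ ≤ 1 * (m E) ^ (1 / N) := by
        gcongr
        · refine ENNReal.rpow_le_one ?_ (by rw [one_div, inv_inv]; exact hp0.le)
          refine le_trans (le_of_eq ?_) hint
          apply lintegral_congr
          intro x
          rw [← ENNReal.rpow_mul, mul_inv_cancel₀ hp0.ne', ENNReal.rpow_one]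
        · apply le_of_eq
          rw [← lintegral_indicator_one hE]
          apply lintegral_congr
          intro x
          by_cases hxE : x ∈ E
          · simp [hxE]
          · simp [hxE, hN0]
    _ = _ := one_mul _

/-! ### The inequality for a bounded set of rays -/

theorem RaySetting.finiteMoment {X : Type*} [MetricSpace X] [MeasurableSpace X]
    {m : Measure X} {u : X → ℝ} (hu : LipschitzWith 1 u) (S : RaySetting m u)
    (μ : Measure X) [IsProbabilityMeasure μ] (x0 : X) (R a b : ℝ)
    (hT : ∀ᵐ x ∂μ, x ∈ Tub u) (hB : ∀ᵐ x ∂μ, dist (S.f x) x0 ≤ R)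
    (hJ : ∀ᵐ x ∂μ, -u x ∈ Icc a b) : FiniteMoment 1 μ := by
  refine ⟨x0, ?_⟩
  refine ne_top_of_le_ne_top
    (b := ∫⁻ _, ENNReal.ofReal (|a| + |b| + |u x0| + R + R) ∂μ) ?_ (lintegral_mono_ae ?_)
  · simp
  filter_upwards [hT, hB, hJ] with x h1 h2 h3
  rw [ENNReal.rpow_one, edist_dist]
  apply ENNReal.ofReal_le_ofReal
  have e1 := S.dist_f h1
  have e2 := dist_triangle x (S.f x) x0
  have e3 := hu.dist_le_mul (S.f x) x0
  rw [Real.dist_eq] at e3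
  simp only [NNReal.coe_one, one_mul] at e3
  have e4 : |u x - u (S.f x)| ≤ |u x| + |u x0| + R := by
    have : u x - u (S.f x) = u x - u x0 - (u (S.f x) - u x0) := by ring
    rw [this]
    have := abs_sub (u x - u x0) (u (S.f x) - u x0)
    have := abs_sub (u x) (u x0)
    linarith
  have e5 : |u x| ≤ |a| + |b| := by
    rw [abs_le]
    have := neg_abs_le a
    have := le_abs_self b
    have := abs_nonneg a
    have := abs_nonneg b
    constructor <;> linarith [h3.1, h3.2]
  linarith

theorem map_fst_normalized {X Y : Type*} [MeasurableSpace X] [MeasurableSpace Y]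
    (μ : Measure X) (ν : Measure Y) [SFinite μ] [SFinite ν]
    (hν0 : ν univ ≠ 0) (hν : ν univ ≠ ∞) :
    ((μ univ * ν univ)⁻¹ • μ.prod ν).map Prod.fst = (μ univ)⁻¹ • μ := by
  rw [Measure.map_smul, Measure.map_fst_prod, smul_smul]
  congr 1
  rw [ENNReal.mul_inv (Or.inr hν) (Or.inr hν0), mul_assoc, ENNReal.inv_mul_cancel hν0 hν, mul_one]

/-- The curvature inequality for densities bounded below on `J₀`, `J₁` and above on the
interpolated interval, over a bounded set `B` of rays. The `W₁`-optimal plan given by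
`CD₁(K,N)` moves mass along the rays, because `u` is a Kantorovich potential. -/
theorem RaySetting.core_bounded {X : Type*} [MetricSpace X] [CompleteSpace X]
    [SecondCountableTopology X] [MeasurableSpace X] [BorelSpace X]
    [MeasurableSpace C(unitInterval, X)] [BorelSpace C(unitInterval, X)]
    {m : Measure X} [IsProbabilityMeasure m] {K N : ℝ} (hN : 1 < N) (hcd : CDone K N m)
    {u : X → ℝ} (hu : LipschitzWith 1 u) (S : RaySetting m u) {Qb : Set X}
    {D : Set X} {H : X × ℝ → ℝ≥0∞} (hD : MeasurableSet D) (hDT : D ⊆ Tub u)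
    (hDnull : m ((Tub u ∩ S.f ⁻¹' Qb) \ D) = 0) (hH : Measurable H)
    (hmap : (m.restrict D).map (fun x => (S.f x, -u x))
        = ((S.q.restrict Qb).prod volume).withDensity H)
    {B : Set X} (hB : MeasurableSet B) (hBQ : B ⊆ Qb) (hB0 : S.q B ≠ 0) {x0 : X} {R : ℝ}
    (hBR : ∀ α ∈ B, dist α x0 ≤ R)
    {a0 a1 l0 l1 : ℝ} (hl0 : 0 < l0) (hl1 : 0 < l1) (hsep : a0 + l0 ≤ a1) (t : unitInterval)
    (A0 A1 At T0 T1 : ℝ≥0∞)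
    (hH0 : ∀ᵐ p ∂((S.q.restrict B).prod (volume.restrict (Icc a0 (a0 + l0)))),
      A0 ≤ H p ∧ H p ≠ 0 ∧ H p ≠ ∞)
    (hH1 : ∀ᵐ p ∂((S.q.restrict B).prod (volume.restrict (Icc a1 (a1 + l1)))),
      A1 ≤ H p ∧ H p ≠ 0 ∧ H p ≠ ∞)
    (hHt : ∀ᵐ p ∂((S.q.restrict B).prod (volume.restrict
      (Icc ((1 - t) * a0 + t * a1) ((1 - t) * a0 + t * a1 + ((1 - t) * l0 + t * l1))))), H p ≤ At)
    (hT : ∀ θ ∈ Icc (a1 - a0 - l0) (a1 - a0 + l1),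
      T0 ≤ tauCoef K N (1 - t) θ ∧ T1 ≤ tauCoef K N t θ) :
    T0 * (ENNReal.ofReal l0 * A0) ^ (1 / N) + T1 * (ENNReal.ofReal l1 * A1) ^ (1 / N)
      ≤ (ENNReal.ofReal ((1 - t) * l0 + t * l1) * At) ^ (1 / N) := by
  have hN0 : 0 < N := by linarith
  have hum : Measurable u := hu.continuous.measurable
  have hqf : IsFiniteMeasure S.q := by rw [S.hq]; infer_instance
  have hF : Measurable (fun x => (S.f x, -u x)) := S.hfmeas.prodMk hum.neg
  have ht0 : (0:ℝ) ≤ t := t.2.1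
  have ht1 : (t:ℝ) ≤ 1 := t.2.2
  have hrest : ∀ J : Set ℝ, MeasurableSet J → ((S.q.restrict Qb).prod volume).restrict (B ×ˢ J)
      = (S.q.restrict B).prod (volume.restrict J) := by
    intro J hJ
    rw [← Measure.prod_restrict, Measure.restrict_restrict_of_subset hBQ]
  have hvalC : ∀ J : Set ℝ, MeasurableSet J →
      ((S.q.restrict Qb).prod volume) (B ×ˢ J) = S.q B * volume J := by
    intro J hJ
    rw [Measure.prod_prod, Measure.restrict_apply hB, inter_eq_left.2 hBQ]
  have hqB : S.q B ≠ ∞ := measure_ne_top _ _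
  -- marginals that are uniform, ray by ray, on an interval of length `l`
  have hlift : ∀ (a l : ℝ) (A : ℝ≥0∞), 0 < l →
      (∀ᵐ p ∂((S.q.restrict B).prod (volume.restrict (Icc a (a + l)))),
        A ≤ H p ∧ H p ≠ 0 ∧ H p ≠ ∞) →
      ∃ μ : Measure X, IsProbabilityMeasure μ ∧ μ ≪ m ∧ μ.map S.f = (S.q B)⁻¹ • S.q.restrict B ∧
        (∀ᵐ x ∂μ, x ∈ D ∧ S.f x ∈ B ∧ -u x ∈ Icc a (a + l)) ∧
        ∀ᵐ x ∂μ, (S.q B * (ENNReal.ofReal l * A)) ^ (1 / N) ≤ (μ.rnDeriv m x) ^ (-(1 / N)) := by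
    intro a l A hl hHA
    have hvol : volume (Icc a (a + l)) = ENNReal.ofReal l := by rw [Real.volume_Icc]; congr 1; ring
    have hl' : ENNReal.ofReal l ≠ 0 := by simpa using hl
    rw [← hrest _ measurableSet_Icc] at hHA
    have hC : MeasurableSet (B ×ˢ Icc a (a + l)) := hB.prod measurableSet_Icc
    have hv := hvalC _ (measurableSet_Icc (a := a) (b := a + l))
    rw [hvol] at hv
    obtain ⟨μ, h1, h2, h3, h4, h5, h6⟩ := exists_lift m hD hF _ hH hmap hC
      (by rw [hv]; exact mul_ne_zero hB0 hl') (by rw [hv]; exact mul_ne_top hqB ofReal_ne_top)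
      A hHA N hN0
    refine ⟨μ, h1, h2, ?_, ?_, ?_⟩
    · have : μ.map S.f = (μ.map (fun x => (S.f x, -u x))).map Prod.fst := by
        rw [Measure.map_map measurable_fst hF]; rfl
      rw [this, h3, hrest _ measurableSet_Icc, hv]
      have := map_fst_normalized (S.q.restrict B) (volume.restrict (Icc a (a + l)))
      simp only [Measure.restrict_apply_univ, hvol] at this
      exact this hl' ofReal_ne_top
    · filter_upwards [h4, h5] with x hx hx'
      exact ⟨hx, hx'.1, hx'.2⟩
    · rw [hv, mul_assoc] at h6
      exact h6
  obtain ⟨μ0, hp0, hac0, hf0, hmem0, hrn0⟩ := hlift a0 l0 A0 hl0 hH0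
  obtain ⟨μ1, hp1, hac1, hf1, hmem1, hrn1⟩ := hlift a1 l1 A1 hl1 hH1
  have hfm0 : FiniteMoment 1 μ0 := S.finiteMoment hu μ0 x0 R _ _
    (hmem0.mono fun x hx => hDT hx.1) (hmem0.mono fun x hx => hBR _ hx.2.1)
    (hmem0.mono fun x hx => hx.2.2)
  have hfm1 : FiniteMoment 1 μ1 := S.finiteMoment hu μ1 x0 R _ _
    (hmem1.mono fun x hx => hDT hx.1) (hmem1.mono fun x hx => hBR _ hx.2.1)
    (hmem1.mono fun x hx => hx.2.2)
  obtain ⟨π, hπ, hcsg, hopt, he0, he1, hact, hent⟩ := hcd μ0 μ1 hp0 hp1 hac0 hac1 hfm0 hfm1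
  have hev : ∀ s : unitInterval, Measurable (eval s : C(unitInterval, X) → X) := fun s =>
    (continuous_eval_const s).measurable
  -- `I` is the common value of `∫ (u x - u y)` over all couplings of `μ0` and `μ1`
  let I : ℝ≥0∞ := ∫⁻ x, ENNReal.ofReal (a0 + l0 + u x) ∂μ0
    + ∫⁻ x, ENNReal.ofReal (-u x - (a0 + l0)) ∂μ1
  have hsplit : ∀ x y : X, -u x ∈ Icc a0 (a0 + l0) → -u y ∈ Icc a1 (a1 + l1) →
      ENNReal.ofReal (u x - u y)
        = ENNReal.ofReal (a0 + l0 + u x) + ENNReal.ofReal (-u y - (a0 + l0)) := by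
    intro x y hx hy
    rw [← ENNReal.ofReal_add (by linarith [hx.2]) (by linarith [hy.1])]
    congr 1; ring
  obtain ⟨κ, hκ, hκf⟩ := exists_fiber_coupling S.hfmeas μ0 μ1 (hf0.trans hf1.symm)
  -- the coupling along the rays has cost `I`
  have hW : Wp 1 μ0 μ1 ≤ I := by
    have h1 : Wp 1 μ0 μ1 ≤ ∫⁻ z, edist z.1 z.2 ^ (1:ℝ) ∂κ := by
      rw [Wp, one_div_one, ENNReal.rpow_one]
      exact iInf₂_le κ hκ
    refine h1.trans (le_of_eq ?_)
    have k0 : ∀ᵐ z ∂κ, z.1 ∈ D ∧ S.f z.1 ∈ B ∧ -u z.1 ∈ Icc a0 (a0 + l0) :=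
      ae_of_ae_map measurable_fst.aemeasurable (by rw [hκ.1]; exact hmem0)
    have k1 : ∀ᵐ z ∂κ, z.2 ∈ D ∧ S.f z.2 ∈ B ∧ -u z.2 ∈ Icc a1 (a1 + l1) :=
      ae_of_ae_map measurable_snd.aemeasurable (by rw [hκ.2]; exact hmem1)
    have h2 : ∫⁻ z, edist z.1 z.2 ^ (1:ℝ) ∂κ
        = ∫⁻ z, (ENNReal.ofReal (a0 + l0 + u z.1) + ENNReal.ofReal (-u z.2 - (a0 + l0))) ∂κ := by
      apply lintegral_congr_ae
      filter_upwards [k0, k1, hκf] with z h0 h1 hf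
      have hg : u z.1 - u z.2 = dist z.1 z.2 := S.gamma_of_f_eq (hDT h0.1) (hDT h1.1) hf
        (by linarith [h0.2.2.2, h1.2.2.1])
      rw [ENNReal.rpow_one, edist_dist, ← hg, hsplit _ _ h0.2.2 h1.2.2]
    rw [h2, lintegral_add_left (by fun_prop)]
    simp only [I]
    rw [← hκ.1, ← hκ.2, lintegral_map (by fun_prop) measurable_fst,
      lintegral_map (by fun_prop) measurable_snd]
  have p0 : ∀ᵐ γ ∂π, γ 0 ∈ D ∧ S.f (γ 0) ∈ B ∧ -u (γ 0) ∈ Icc a0 (a0 + l0) :=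
    ae_of_ae_map (hev 0).aemeasurable (by rw [he0]; exact hmem0)
  have p1 : ∀ᵐ γ ∂π, γ 1 ∈ D ∧ S.f (γ 1) ∈ B ∧ -u (γ 1) ∈ Icc a1 (a1 + l1) :=
    ae_of_ae_map (hev 1).aemeasurable (by rw [he1]; exact hmem1)
  have hI : ∫⁻ γ, ENNReal.ofReal (u (γ 0) - u (γ 1)) ∂π = I := by
    have h2 : ∫⁻ γ, ENNReal.ofReal (u (γ 0) - u (γ 1)) ∂π
        = ∫⁻ γ, (ENNReal.ofReal (a0 + l0 + u (eval 0 γ))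
          + ENNReal.ofReal (-u (eval 1 γ) - (a0 + l0))) ∂π := by
      apply lintegral_congr_ae
      filter_upwards [p0, p1] with γ h0 h1
      exact hsplit _ _ h0.2.2 h1.2.2
    have hm0 : Measurable fun γ : C(unitInterval, X) =>
        ENNReal.ofReal (a0 + l0 + u (eval 0 γ)) := by
      have := hev 0
      fun_prop
    rw [h2, lintegral_add_left hm0]
    simp only [I]
    rw [← he0, ← he1, lintegral_map (by fun_prop) (hev 0), lintegral_map (by fun_prop) (hev 1)]
  have hIfin : I ≠ ∞ := by
    simp only [I]
    refine ENNReal.add_ne_top.2 ⟨?_, ?_⟩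
    · refine ne_top_of_le_ne_top (b := ∫⁻ _, ENNReal.ofReal l0 ∂μ0) (by simp)
        (lintegral_mono_ae ?_)
      filter_upwards [hmem0] with x hx
      exact ENNReal.ofReal_le_ofReal (by linarith [hx.2.2.1])
    · refine ne_top_of_le_ne_top (b := ∫⁻ _, ENNReal.ofReal (a1 + l1 - (a0 + l0)) ∂μ1) (by simp)
        (lintegral_mono_ae ?_)
      filter_upwards [hmem1] with x hx
      exact ENNReal.ofReal_le_ofReal (by linarith [hx.2.2.2])
  have hlip : ∀ x y, u x - u y ≤ dist x y := fun x y => by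
    have := hu.dist_le_mul x y
    rw [Real.dist_eq] at this
    simp only [NNReal.coe_one, one_mul] at this
    exact (le_abs_self _).trans this
  have hgam : ∀ᵐ γ ∂π, (γ 0, γ 1) ∈ Gamma u := by
    have hle : (fun γ : C(unitInterval, X) => ENNReal.ofReal (u (γ 0) - u (γ 1)))
        ≤ᵐ[π] fun γ => edist (γ 0) (γ 1) := by
      refine Filter.Eventually.of_forall fun γ => ?_
      simp only [edist_dist]
      exact ENNReal.ofReal_le_ofReal (hlip _ _)
    have hmeas : AEMeasurable (fun γ : C(unitInterval, X) => edist (γ 0) (γ 1)) π :=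
      ((hev 0).edist (hev 1)).aemeasurable
    have := ae_eq_of_ae_le_of_lintegral_le hle (by rw [hI]; exact hIfin) hmeas
      (by rw [hI, hopt]; exact hW)
    filter_upwards [this, p0, p1] with γ hγ h0 h1
    rw [edist_dist] at hγ
    exact (ENNReal.ofReal_eq_ofReal_iff (by linarith [h0.2.2.2, h1.2.2.1]) dist_nonneg).1 hγ
  have hgeo : ∀ᵐ γ ∂π, IsCSG γ := hcsg
  set J := Icc ((1 - (t:ℝ)) * a0 + t * a1)
    ((1 - (t:ℝ)) * a0 + t * a1 + ((1 - t) * l0 + t * l1)) with hJ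
  -- the interpolated measure lives on the interpolated interval of each ray
  set E := D ∩ (fun x => (S.f x, -u x)) ⁻¹' (B ×ˢ J) with hE
  have hEm : MeasurableSet E := hD.inter (hF (hB.prod measurableSet_Icc))
  have hπt : IsProbabilityMeasure (π.map (eval t)) :=
    Measure.isProbabilityMeasure_map (hev t).aemeasurable
  have hmt : ∀ᵐ x ∂(π.map (eval t)), x ∈ E := by
    have hn : ∀ᵐ x ∂(π.map (eval t)), x ∉ (Tub u ∩ S.f ⁻¹' Qb) \ D :=
      measure_eq_zero_iff_ae_notMem.1 (hact t hDnull)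
    refine (ae_map_iff (p := fun x => x ∈ E) (hev t).aemeasurable hEm).2 ?_
    filter_upwards [ae_of_ae_map (hev t).aemeasurable hn, hgeo, hgam, p0, p1] with γ g1 g2 g3 g4 g5
    obtain ⟨e1, e2, e3⟩ := S.geodesic_mem hu g2 (hDT g4.1) (hDT g5.1) g3 t
    have hfB : S.f (γ t) ∈ B := by rw [e2]; exact g4.2.1
    refine ⟨?_, hfB, ?_⟩
    · by_contra hc
      exact g1 ⟨⟨e1, hBQ hfB⟩, hc⟩
    · change -u (γ t) ∈ J
      rw [e3, hJ]
      have := g4.2.2.1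
      have := g4.2.2.2
      have := g5.2.2.1
      have := g5.2.2.2
      constructor <;> nlinarith
  have hmE : m E ≤ S.q B * (ENNReal.ofReal ((1 - t) * l0 + t * l1) * At) := by
    have h1 : m E = (m.restrict D).map (fun x => (S.f x, -u x)) (B ×ˢ J) := by
      rw [Measure.map_apply hF (hB.prod measurableSet_Icc),
        Measure.restrict_apply (hF (hB.prod measurableSet_Icc)), inter_comm]
    rw [h1, hmap, withDensity_apply _ (hB.prod measurableSet_Icc), hrest _ measurableSet_Icc]
    refine (lintegral_mono_ae hHt).trans (le_of_eq ?_)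
    rw [lintegral_const, Measure.prod_apply MeasurableSet.univ]
    simp only [preimage_univ, Measure.restrict_apply_univ, lintegral_const]
    rw [hJ, Real.volume_Icc]
    simp only [add_sub_cancel_left]
    ring
  have hup := renyi_le m _ (hact t) hEm hmt hN
  have hlow : T0 * (S.q B * (ENNReal.ofReal l0 * A0)) ^ (1 / N)
      + T1 * (S.q B * (ENNReal.ofReal l1 * A1)) ^ (1 / N)
      ≤ ∫⁻ γ, (tauCoef K N (1 - (t : ℝ)) (dist (γ 0) (γ 1)) * (μ0.rnDeriv m (γ 0)) ^ (-(1 / N))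
            + tauCoef K N (t : ℝ) (dist (γ 0) (γ 1)) * (μ1.rnDeriv m (γ 1)) ^ (-(1 / N))) ∂π := by
    have r0 : ∀ᵐ γ ∂π, (S.q B * (ENNReal.ofReal l0 * A0)) ^ (1 / N)
        ≤ (μ0.rnDeriv m (γ 0)) ^ (-(1 / N)) :=
      ae_of_ae_map (hev 0).aemeasurable (by rw [he0]; exact hrn0)
    have r1 : ∀ᵐ γ ∂π, (S.q B * (ENNReal.ofReal l1 * A1)) ^ (1 / N)
        ≤ (μ1.rnDeriv m (γ 1)) ^ (-(1 / N)) :=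
      ae_of_ae_map (hev 1).aemeasurable (by rw [he1]; exact hrn1)
    have hconst : ∀ c : ℝ≥0∞, c = ∫⁻ _, c ∂π := fun c => by simp
    rw [hconst (T0 * _ + _)]
    refine lintegral_mono_ae ?_
    filter_upwards [r0, r1, p0, p1, hgam] with γ g1 g2 g3 g4 g5
    have hθ : u (γ 0) - u (γ 1) = dist (γ 0) (γ 1) := g5
    have hTθ := hT (dist (γ 0) (γ 1)) (by
      rw [← hθ]
      constructor <;> linarith [g3.2.2.1, g3.2.2.2, g4.2.2.1, g4.2.2.2])
    exact add_le_add (mul_le_mul' hTθ.1 g1) (mul_le_mul' hTθ.2 g2)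
  have hfin := (hlow.trans (hent t N le_rfl)).trans (hup.trans
    (ENNReal.rpow_le_rpow hmE (by positivity)))
  have hN1 : 0 ≤ 1 / N := by positivity
  simp only [ENNReal.mul_rpow_of_nonneg (S.q B) _ hN1] at hfin
  have hc0 : (S.q B) ^ (1 / N) ≠ 0 := (ENNReal.rpow_pos (pos_iff_ne_zero.2 hB0) hqB).ne'
  have hct : (S.q B) ^ (1 / N) ≠ ∞ := ENNReal.rpow_ne_top_of_nonneg hN1 hqB
  refine (ENNReal.mul_le_mul_iff_right hc0 hct).1 ?_
  refine le_trans (le_of_eq ?_) hfin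
  ring

/-! ### Arbitrary sets of rays -/

/-- `RaySetting.core_bounded` without the boundedness of `B`, and with the bounds on `H` required
ray by ray. -/
theorem RaySetting.core {X : Type*} [MetricSpace X] [CompleteSpace X]
    [SecondCountableTopology X] [MeasurableSpace X] [BorelSpace X]
    [MeasurableSpace C(unitInterval, X)] [BorelSpace C(unitInterval, X)]
    {m : Measure X} [IsProbabilityMeasure m] {K N : ℝ} (hN : 1 < N) (hcd : CDone K N m)
    {u : X → ℝ} (hu : LipschitzWith 1 u) (S : RaySetting m u) {Qb : Set X}
    {D : Set X} {H : X × ℝ → ℝ≥0∞} (hD : MeasurableSet D) (hDT : D ⊆ Tub u)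
    (hDnull : m ((Tub u ∩ S.f ⁻¹' Qb) \ D) = 0) (hH : Measurable H)
    (hmap : (m.restrict D).map (fun x => (S.f x, -u x))
        = ((S.q.restrict Qb).prod volume).withDensity H)
    {B : Set X} (hB : MeasurableSet B) (hBQ : B ⊆ Qb) (hB0 : S.q B ≠ 0)
    {a0 a1 l0 l1 : ℝ} (hl0 : 0 < l0) (hl1 : 0 < l1) (hsep : a0 + l0 ≤ a1) (t : unitInterval)
    (A0 A1 At T0 T1 : ℝ≥0∞)
    (hH0 : ∀ α ∈ B, ∀ᵐ r ∂(volume.restrict (Icc a0 (a0 + l0))),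
      A0 ≤ H (α, r) ∧ H (α, r) ≠ 0 ∧ H (α, r) ≠ ∞)
    (hH1 : ∀ α ∈ B, ∀ᵐ r ∂(volume.restrict (Icc a1 (a1 + l1))),
      A1 ≤ H (α, r) ∧ H (α, r) ≠ 0 ∧ H (α, r) ≠ ∞)
    (hHt : ∀ α ∈ B, ∀ᵐ r ∂(volume.restrict
      (Icc ((1 - t) * a0 + t * a1) ((1 - t) * a0 + t * a1 + ((1 - t) * l0 + t * l1)))),
      H (α, r) ≤ At)
    (hT : ∀ θ ∈ Icc (a1 - a0 - l0) (a1 - a0 + l1),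
      T0 ≤ tauCoef K N (1 - t) θ ∧ T1 ≤ tauCoef K N t θ) :
    T0 * (ENNReal.ofReal l0 * A0) ^ (1 / N) + T1 * (ENNReal.ofReal l1 * A1) ^ (1 / N)
      ≤ (ENNReal.ofReal ((1 - t) * l0 + t * l1) * At) ^ (1 / N) := by
  have hqf : IsFiniteMeasure S.q := by rw [S.hq]; infer_instance
  obtain ⟨x0, -⟩ := nonempty_of_measure_ne_zero hB0
  obtain ⟨n, hn⟩ : ∃ n : ℕ, S.q (B ∩ Metric.closedBall x0 n) ≠ 0 := by
    by_contra hc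
    push Not at hc
    refine hB0 ?_
    rw [← inter_univ B, ← Metric.iUnion_closedBall_nat x0, inter_iUnion]
    exact measure_iUnion_null hc
  have hB' : MeasurableSet (B ∩ Metric.closedBall x0 n) :=
    hB.inter Metric.isClosed_closedBall.measurableSet
  have hlow : ∀ A : ℝ≥0∞, MeasurableSet {p : X × ℝ | A ≤ H p ∧ H p ≠ 0 ∧ H p ≠ ∞} := fun A =>
    (measurableSet_le measurable_const hH).inter
      ((hH (measurableSet_singleton 0).compl).inter (hH (measurableSet_singleton ∞).compl))
  have hup : MeasurableSet {p : X × ℝ | H p ≤ At} := measurableSet_le hH measurable_const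
  refine S.core_bounded hN hcd hu hD hDT hDnull hH hmap hB' (inter_subset_left.trans hBQ) hn
    (x0 := x0) (R := n) (fun α hα => hα.2) hl0 hl1 hsep t A0 A1 At T0 T1 ?_ ?_ ?_ hT
  · rw [Measure.ae_prod_iff_ae_ae (hlow A0)]
    filter_upwards [ae_restrict_mem hB'] with α hα using hH0 α hα.1
  · rw [Measure.ae_prod_iff_ae_ae (hlow A1)]
    filter_upwards [ae_restrict_mem hB'] with α hα using hH1 α hα.1
  · rw [Measure.ae_prod_iff_ae_ae hup]
    filter_upwards [ae_restrict_mem hB'] with α hα using hHt α hα.1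

/-! ### The inequality on almost every ray -/

theorem measurableSet_ae_section {X : Type*} [MeasurableSpace X] (ν : Measure ℝ) [SFinite ν]
    {P : X × ℝ → Prop} (hP : MeasurableSet {p | P p}) :
    MeasurableSet {α : X | ∀ᵐ r ∂ν, P (α, r)} :=
  measurable_measure_prodMk_left (ν := ν) hP.compl (measurableSet_singleton 0)

/-- Countably many instances of `RaySetting.core` at once: on almost every ray the inequality
holds for all rational bounds on `H` over short intervals with a rational left endpoint. -/
theorem RaySetting.ae_core {X : Type*} [MetricSpace X] [CompleteSpace X]
    [SecondCountableTopology X] [MeasurableSpace X] [BorelSpace X]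
    [MeasurableSpace C(unitInterval, X)] [BorelSpace C(unitInterval, X)]
    {m : Measure X} [IsProbabilityMeasure m] {K N : ℝ} (hN : 1 < N) (hcd : CDone K N m)
    {u : X → ℝ} (hu : LipschitzWith 1 u) (S : RaySetting m u) {Qb : Set X}
    (hQb : MeasurableSet Qb)
    {D : Set X} {H : X × ℝ → ℝ≥0∞} (hD : MeasurableSet D) (hDT : D ⊆ Tub u)
    (hDnull : m ((Tub u ∩ S.f ⁻¹' Qb) \ D) = 0) (hH : Measurable H)
    (hmap : (m.restrict D).map (fun x => (S.f x, -u x))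
        = ((S.q.restrict Qb).prod volume).withDensity H)
    {R0 R1 L0 L1 : ℝ} (hL0 : 0 < L0) (hL1 : 0 < L1) (t : unitInterval) {T0 T1 : ℝ≥0∞}
    {δ : ℝ} (hT : ∀ θ, |θ - (R1 - R0)| ≤ δ →
      T0 ≤ tauCoef K N (1 - t) θ ∧ T1 ≤ tauCoef K N t θ) :
    ∀ᵐ α ∂(S.q.restrict Qb), ∀ (a : ℚ) (k : ℕ) (A0 A1 At : ℚ), 0 < k → L0 / k ≤ δ → L1 / k ≤ δ →
      L0 / k ≤ R1 - R0 →
      (∀ᵐ r ∂(volume.restrict (Icc (a : ℝ) (a + L0 / k))),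
        ENNReal.ofReal A0 ≤ H (α, r) ∧ H (α, r) ≠ 0 ∧ H (α, r) ≠ ∞) →
      (∀ᵐ r ∂(volume.restrict (Icc (a + (R1 - R0)) (a + (R1 - R0) + L1 / k))),
        ENNReal.ofReal A1 ≤ H (α, r) ∧ H (α, r) ≠ 0 ∧ H (α, r) ≠ ∞) →
      (∀ᵐ r ∂(volume.restrict (Icc ((1 - t) * (a : ℝ) + t * (a + (R1 - R0)))
        ((1 - t) * (a : ℝ) + t * (a + (R1 - R0)) + ((1 - t) * (L0 / k) + t * (L1 / k))))),
        H (α, r) ≤ ENNReal.ofReal At) →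
      T0 * (ENNReal.ofReal L0 * ENNReal.ofReal A0) ^ (1 / N)
        + T1 * (ENNReal.ofReal L1 * ENNReal.ofReal A1) ^ (1 / N)
        ≤ (ENNReal.ofReal ((1 - t) * L0 + t * L1) * ENNReal.ofReal At) ^ (1 / N) := by
  simp only [ae_all_iff]
  intro a k A0 A1 At hk hδ0 hδ1 hR
  have hk' : (0 : ℝ) < k := by exact_mod_cast hk
  have hN0 : 0 < N := by linarith
  have hN1 : 0 ≤ 1 / N := by positivity
  have hlow : ∀ A : ℝ≥0∞, MeasurableSet {p : X × ℝ | A ≤ H p ∧ H p ≠ 0 ∧ H p ≠ ∞} := fun A =>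
    (measurableSet_le measurable_const hH).inter
      ((hH (measurableSet_singleton 0).compl).inter (hH (measurableSet_singleton ∞).compl))
  have hup : MeasurableSet {p : X × ℝ | H p ≤ ENNReal.ofReal At} :=
    measurableSet_le hH measurable_const
  by_cases hineq : T0 * (ENNReal.ofReal L0 * ENNReal.ofReal A0) ^ (1 / N)
        + T1 * (ENNReal.ofReal L1 * ENNReal.ofReal A1) ^ (1 / N)
        ≤ (ENNReal.ofReal ((1 - t) * L0 + t * L1) * ENNReal.ofReal At) ^ (1 / N)
  · exact Filter.Eventually.of_forall fun α _ _ _ => hineq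
  set B : Set X := Qb ∩ ({α | ∀ᵐ r ∂(volume.restrict (Icc (a : ℝ) (a + L0 / k))),
        ENNReal.ofReal A0 ≤ H (α, r) ∧ H (α, r) ≠ 0 ∧ H (α, r) ≠ ∞} ∩
      ({α | ∀ᵐ r ∂(volume.restrict (Icc (a + (R1 - R0)) (a + (R1 - R0) + L1 / k))),
        ENNReal.ofReal A1 ≤ H (α, r) ∧ H (α, r) ≠ 0 ∧ H (α, r) ≠ ∞} ∩
      {α | ∀ᵐ r ∂(volume.restrict (Icc ((1 - t) * (a : ℝ) + t * (a + (R1 - R0)))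
        ((1 - t) * (a : ℝ) + t * (a + (R1 - R0)) + ((1 - t) * (L0 / k) + t * (L1 / k))))),
        H (α, r) ≤ ENNReal.ofReal At})) with hBdef
  have hB : MeasurableSet B := hQb.inter ((measurableSet_ae_section _ (hlow _)).inter
    ((measurableSet_ae_section _ (hlow _)).inter (measurableSet_ae_section _ hup)))
  have hBnull : S.q B = 0 := by
    by_contra hB0
    apply hineq
    have := S.core hN hcd hu hD hDT hDnull hH hmap hB inter_subset_left hB0
      (a0 := a) (a1 := a + (R1 - R0)) (l0 := L0 / k) (l1 := L1 / k)
      (by positivity) (by positivity) (by linarith) t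
      (ENNReal.ofReal A0) (ENNReal.ofReal A1) (ENNReal.ofReal At) T0 T1
      (fun α hα => hα.2.1) (fun α hα => hα.2.2.1) (fun α hα => hα.2.2.2) (by
        intro θ hθ
        apply hT
        rw [abs_le]
        constructor <;> linarith [hθ.1, hθ.2])
    -- cancel the common factor `k ^ (-1 / N)`
    have hs : ∀ L A : ℝ, (ENNReal.ofReal (L / k) * ENNReal.ofReal A) ^ (1 / N)
        = ENNReal.ofReal (1 / k) ^ (1 / N) * (ENNReal.ofReal L * ENNReal.ofReal A) ^ (1 / N) := by
      intro L A
      rw [← ENNReal.mul_rpow_of_nonneg _ _ hN1, ← mul_assoc,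
        ← ENNReal.ofReal_mul (by positivity : (0:ℝ) ≤ 1 / k)]
      congr 3
      ring
    have hsum : (1 - (t:ℝ)) * (L0 / k) + t * (L1 / k) = ((1 - t) * L0 + t * L1) / k := by ring
    rw [hsum, hs, hs, hs] at this
    have hpos : ENNReal.ofReal (1 / (k:ℝ)) ≠ 0 := by simpa using hk.ne'
    refine (ENNReal.mul_le_mul_iff_right
      (ENNReal.rpow_pos (pos_iff_ne_zero.2 hpos) ofReal_ne_top).ne'
      (ENNReal.rpow_ne_top_of_nonneg hN1 (ofReal_ne_top (r := 1 / (k:ℝ))))).1 ?_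
    refine le_trans (le_of_eq ?_) this
    ring
  have h1 : ∀ᵐ α ∂(S.q.restrict Qb), α ∉ B :=
    ae_restrict_of_ae (measure_eq_zero_iff_ae_notMem.1 hBnull)
  filter_upwards [h1, ae_restrict_mem hQb] with α h2 h3 h4 h5 h6
  exact absurd ⟨h3, h4, h5, h6⟩ h2

/-- Short intervals to the right of `R₀`, `R₁` and `(1 - t) R₀ + t R₁` on which a density that is
continuous on an interval satisfies strict bounds valid at these points. -/
theorem exists_short_intervals {h : ℝ → ℝ} {I : Set ℝ} (hc : ContinuousOn h I)
    (hpos : ∀ r ∈ interior I, 0 < h r) {R0 R1 L L0 L1 δ c t : ℝ} (hR : R0 < R1) (hL : 0 < L)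
    (hL0 : 0 < L0) (hδ : 0 < δ) (ht0 : 0 ≤ t) (ht1 : t ≤ 1)
    (hI : Icc R0 (R1 + L) ⊆ I) {G : ℝ → ℝ≥0∞}
    (hG : ∀ᵐ r, G r = I.indicator (fun s => ENNReal.ofReal (h s)) (r + c))
    {A0 A1 At : ℝ} (hA0 : A0 < h R0) (hA1 : A1 < h R1) (hAt : h ((1 - t) * R0 + t * R1) < At) :
    ∃ (a : ℚ) (k : ℕ), 0 < k ∧ L0 / k ≤ δ ∧ L1 / k ≤ δ ∧ L0 / k ≤ R1 - R0 ∧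
      (∀ᵐ r ∂(volume.restrict (Icc (a : ℝ) (a + L0 / k))),
        ENNReal.ofReal A0 ≤ G r ∧ G r ≠ 0 ∧ G r ≠ ∞) ∧
      (∀ᵐ r ∂(volume.restrict (Icc (a + (R1 - R0)) (a + (R1 - R0) + L1 / k))),
        ENNReal.ofReal A1 ≤ G r ∧ G r ≠ 0 ∧ G r ≠ ∞) ∧
      (∀ᵐ r ∂(volume.restrict (Icc ((1 - t) * (a : ℝ) + t * (a + (R1 - R0)))
        ((1 - t) * (a : ℝ) + t * (a + (R1 - R0)) + ((1 - t) * (L0 / k) + t * (L1 / k))))),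
        G r ≤ ENNReal.ofReal At) := by
  set Rt := (1 - t) * R0 + t * R1 with hRt
  have hRt0 : R0 ≤ Rt := by nlinarith
  have hRt1 : Rt ≤ R1 := by nlinarith
  have hint : Ioo R0 (R1 + L) ⊆ interior I :=
    interior_maximal (Ioo_subset_Icc_self.trans hI) isOpen_Ioo
  obtain ⟨ε0, hε0, h0⟩ := Metric.mem_nhdsWithin_iff.1
    ((hc R0 (hI ⟨le_rfl, by linarith⟩)).eventually (lt_mem_nhds hA0))
  obtain ⟨ε1, hε1, h1⟩ := Metric.mem_nhdsWithin_iff.1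
    ((hc R1 (hI ⟨by linarith, by linarith⟩)).eventually (lt_mem_nhds hA1))
  obtain ⟨εt, hεt, h2⟩ := Metric.mem_nhdsWithin_iff.1
    ((hc Rt (hI ⟨by linarith, by linarith⟩)).eventually (gt_mem_nhds hAt))
  obtain ⟨ε, hε, hle⟩ : ∃ ε > 0, ε ≤ ε0 ∧ ε ≤ ε1 ∧ ε ≤ εt ∧ ε ≤ L ∧ ε ≤ δ ∧ ε ≤ R1 - R0 := by
    refine ⟨min ε0 (min ε1 (min εt (min L (min δ (R1 - R0))))), ?_, ?_⟩
    · simp [hε0, hε1, hεt, hL, hδ, hR]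
    · simp
  obtain ⟨g0, g1, gt, gL, gδ, gR⟩ := hle
  obtain ⟨a, ha1, ha2⟩ := exists_rat_btwn (show R0 - c < R0 - c + ε / 2 by linarith)
  obtain ⟨k, hk⟩ := exists_nat_gt (max L0 L1 / (ε / 2))
  have hm0 : 0 < max L0 L1 := lt_max_of_lt_left hL0
  have hk0 : (0:ℝ) < k := lt_trans (by positivity) hk
  rw [div_lt_iff₀ (by positivity)] at hk
  have hb0 : L0 / k < ε / 2 := by
    rw [div_lt_iff₀ hk0]; linarith [le_max_left L0 L1]
  have hb1 : L1 / k < ε / 2 := by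
    rw [div_lt_iff₀ hk0]; linarith [le_max_right L0 L1]
  have hval : ∀ r : ℝ, G r = I.indicator (fun s => ENNReal.ofReal (h s)) (r + c) →
      R0 < r + c → r + c < R1 + L → G r = ENNReal.ofReal (h (r + c)) := by
    intro r hr h3 h4
    rw [hr, indicator_of_mem (hI ⟨h3.le, h4.le⟩)]
  have hlow : ∀ (R η A x l : ℝ), R0 ≤ R → R ≤ R1 → ε ≤ η →
      Metric.ball R η ∩ I ⊆ {y | A < h y} → R < x + c → x + c < R + ε / 2 → l < ε / 2 →
      ∀ᵐ r ∂(volume.restrict (Icc x (x + l))),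
        ENNReal.ofReal A ≤ G r ∧ G r ≠ 0 ∧ G r ≠ ∞ := by
    intro R η A x l e1 e2 e3 e4 e5 e6 e7
    filter_upwards [ae_restrict_of_ae hG, ae_restrict_mem measurableSet_Icc] with r hr hm
    have k1 : R0 < r + c := by linarith [hm.1]
    have k2 : r + c < R1 + L := by linarith [hm.2]
    rw [hval r hr k1 k2]
    have hp := hpos _ (hint ⟨k1, k2⟩)
    refine ⟨ENNReal.ofReal_le_ofReal (le_of_lt (e4 ⟨?_, hI ⟨k1.le, k2.le⟩⟩)), by simpa using hp,
      ofReal_ne_top⟩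
    rw [Metric.mem_ball, Real.dist_eq, abs_lt]
    constructor <;> linarith [hm.1, hm.2]
  refine ⟨a, k, by exact_mod_cast hk0, by linarith, by linarith, by linarith, ?_, ?_, ?_⟩
  · exact hlow R0 ε0 A0 a _ le_rfl hR.le g0 h0 (by linarith) (by linarith) hb0
  · exact hlow R1 ε1 A1 _ _ hR.le le_rfl g1 h1 (by linarith) (by linarith) hb1
  · filter_upwards [ae_restrict_of_ae hG, ae_restrict_mem measurableSet_Icc] with r hr hm
    have hx : (1 - t) * (a:ℝ) + t * (a + (R1 - R0)) = a + (Rt - R0) := by rw [hRt]; ring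
    have hl : (1 - t) * (L0 / k) + t * (L1 / k) < ε / 2 := by
      rcases le_total (L0 / k) (L1 / k) with hh | hh <;> nlinarith
    rw [hx] at hm
    have k1 : R0 < r + c := by linarith [hm.1]
    have k2 : r + c < R1 + L := by linarith [hm.2]
    rw [hval r hr k1 k2]
    refine ENNReal.ofReal_le_ofReal (le_of_lt (h2 ⟨?_, hI ⟨k1.le, k2.le⟩⟩))
    rw [Metric.mem_ball, Real.dist_eq, abs_lt]
    constructor <;> linarith [hm.1, hm.2]

/-- The curvature inequality on almost every single ray, with constants `T₀`, `T₁` that bound the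
distortion coefficients from below near `R₁ - R₀`. -/
theorem RaySetting.pointwise {X : Type*} [MetricSpace X] [CompleteSpace X]
    [SecondCountableTopology X] [MeasurableSpace X] [BorelSpace X]
    [MeasurableSpace C(unitInterval, X)] [BorelSpace C(unitInterval, X)]
    {m : Measure X} [IsProbabilityMeasure m] {K N : ℝ} (hN : 1 < N) (hcd : CDone K N m)
    {u : X → ℝ} (hu : LipschitzWith 1 u) (S : RaySetting m u)
    (hcont : ∀ᵐ α ∂S.q, ContinuousOn (S.h α) (S.dom α) ∧
      ∀ r ∈ interior (S.dom α), 0 < S.h α r)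
    {Qb : Set X} (hQb : MeasurableSet Qb) (hQbsub : Qb ⊆ S.Q)
    {R0 R1 L0 L1 : ℝ} (hR : R0 < R1) (hL0 : 0 < L0) (hL1 : 0 < L1) (t : unitInterval)
    {T0 T1 : ℝ≥0∞} (hT0 : T0 ≠ ∞) (hT1 : T1 ≠ ∞)
    {δ : ℝ} (hδ : 0 < δ) (hT : ∀ θ, |θ - (R1 - R0)| ≤ δ →
      T0 ≤ tauCoef K N (1 - t) θ ∧ T1 ≤ tauCoef K N t θ) :
    ∀ᵐ α ∂(S.q.restrict Qb), ∀ L > 0, Icc R0 (R1 + L) ⊆ S.dom α →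
      T0 * (ENNReal.ofReal L0 * ENNReal.ofReal (S.h α R0)) ^ (1 / N)
        + T1 * (ENNReal.ofReal L1 * ENNReal.ofReal (S.h α R1)) ^ (1 / N)
        ≤ (ENNReal.ofReal ((1 - t) * L0 + t * L1)
          * ENNReal.ofReal (S.h α ((1 - t) * R0 + t * R1))) ^ (1 / N) := by
  obtain ⟨D, H, hD, hDT, -, hDnull, hH, hmap, hHc⟩ :=
    S.exists_density hu.continuous (hcont.mono fun _ h => h.1) hQb hQbsub
  filter_upwards [S.ae_core hN hcd hu hQb hD hDT hDnull hH hmap hL0 hL1 t hT, hHc,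
    ae_restrict_of_ae hcont] with α h1 h2 h3 L hL hI
  obtain ⟨c, hc⟩ := h2
  obtain ⟨s0, -, s0lt, s0t⟩ := Real.exists_seq_rat_strictMono_tendsto (S.h α R0)
  obtain ⟨s1, -, s1lt, s1t⟩ := Real.exists_seq_rat_strictMono_tendsto (S.h α R1)
  obtain ⟨st, -, stgt, stt⟩ := Real.exists_seq_rat_strictAnti_tendsto
    (S.h α ((1 - t) * R0 + t * R1))
  have hcn : ∀ (T : ℝ≥0∞) (M : ℝ), T ≠ ∞ → Continuous fun A : ℝ =>
      T * (ENNReal.ofReal M * ENNReal.ofReal A) ^ (1 / N) := fun T M hTT =>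
    (ENNReal.continuous_const_mul hTT).comp (ENNReal.continuous_rpow_const.comp
      ((ENNReal.continuous_const_mul ofReal_ne_top).comp ENNReal.continuous_ofReal))
  have lim0 := ((hcn T0 L0 hT0).tendsto _).comp s0t
  have lim1 := ((hcn T1 L1 hT1).tendsto _).comp s1t
  have limt := ((hcn 1 ((1 - t) * L0 + t * L1) one_ne_top).tendsto _).comp stt
  simp only [one_mul] at limt
  refine le_of_tendsto_of_tendsto' (lim0.add lim1) limt fun n => ?_
  obtain ⟨a, k, e1, e2, e3, e4, e5, e6, e7⟩ := exists_short_intervals h3.1 h3.2 hR hL hL0 hδ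
    t.2.1 t.2.2 hI hc (s0lt n) (s1lt n) (stgt n)
  have := h1 a k (s0 n) (s1 n) (st n) e1 e2 e3 e4 e5 e6 e7
  simpa using this

/-! ### Distortion coefficients and conclusion -/

theorem sigmaCoef_continuousAt {K M t θ₀ : ℝ} (hM : 0 < M) (hθ : 0 < θ₀)
    (hlt : K * θ₀ ^ 2 < M * Real.pi ^ 2) :
    ContinuousAt (sigmaCoef K M t) θ₀ ∧ sigmaCoef K M t θ₀ ≠ ∞ := by
  have e1 : ∀ᶠ θ in nhds θ₀, 0 < θ := lt_mem_nhds hθ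
  have e2 : ∀ᶠ θ in nhds θ₀, K * θ ^ 2 < M * Real.pi ^ 2 :=
    (show Continuous fun θ : ℝ => K * θ ^ 2 by fun_prop).continuousAt.eventually
      (gt_mem_nhds hlt)
  suffices h : ∃ φ : ℝ → ℝ, ContinuousAt φ θ₀ ∧
      ∀ θ, 0 < θ → K * θ ^ 2 < M * Real.pi ^ 2 → sigmaCoef K M t θ = ENNReal.ofReal (φ θ) by
    obtain ⟨φ, h1, h2⟩ := h
    refine ⟨?_, by rw [h2 _ hθ hlt]; exact ofReal_ne_top⟩
    refine ContinuousAt.congr (ENNReal.continuous_ofReal.continuousAt.comp h1) ?_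
    filter_upwards [e1, e2] with θ k1 k2 using (h2 θ k1 k2).symm
  rcases lt_trichotomy K 0 with hK | hK | hK
  · refine ⟨fun θ => Real.sinh (t * θ * Real.sqrt (-K / M)) / Real.sinh (θ * Real.sqrt (-K / M)),
      ?_, ?_⟩
    · refine ContinuousAt.div (by fun_prop) (by fun_prop) ?_
      have hs : 0 < Real.sqrt (-K / M) := Real.sqrt_pos.2 (div_pos (by linarith) hM)
      exact (Real.sinh_pos_iff.2 (mul_pos hθ hs)).ne'
    · intro θ k1 k2
      have : K * θ ^ 2 < 0 := mul_neg_of_neg_of_pos hK (by positivity)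
      rw [sigmaCoef, if_neg (not_le.2 k2), if_neg this.not_gt, if_neg this.ne]
  · refine ⟨fun _ => t, continuousAt_const, ?_⟩
    intro θ k1 k2
    rw [sigmaCoef, if_neg (not_le.2 k2)]
    simp [hK]
  · refine ⟨fun θ => Real.sin (t * θ * Real.sqrt (K / M)) / Real.sin (θ * Real.sqrt (K / M)),
      ?_, ?_⟩
    · refine ContinuousAt.div (by fun_prop) (by fun_prop) ?_
      have hs : 0 < Real.sqrt (K / M) := Real.sqrt_pos.2 (div_pos hK hM)
      refine (Real.sin_pos_of_pos_of_lt_pi (mul_pos hθ hs) ?_).ne'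
      refine lt_of_pow_lt_pow_left₀ 2 Real.pi_pos.le ?_
      rw [mul_pow, Real.sq_sqrt (div_pos hK hM).le, ← mul_div_assoc, div_lt_iff₀ hM]
      linarith
    · intro θ k1 k2
      have : 0 < K * θ ^ 2 := by positivity
      rw [sigmaCoef, if_neg (not_le.2 k2), if_pos this]

/-- Lower semicontinuity of `τ` below the critical length, in multiplicative form. -/
theorem tauCoef_near {K N t θ₀ : ℝ} (hN : 1 < N) (hθ : 0 < θ₀)
    (hlt : K * θ₀ ^ 2 < (N - 1) * Real.pi ^ 2) {c : ℝ≥0∞} (hc : c < 1) :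
    tauCoef K N t θ₀ ≠ ∞ ∧ ∀ᶠ θ in nhds θ₀, c * tauCoef K N t θ₀ ≤ tauCoef K N t θ := by
  obtain ⟨h1, h2⟩ := sigmaCoef_continuousAt (t := t) (sub_pos.2 hN) hθ hlt
  have hp : 0 ≤ 1 - 1 / N := by
    rw [sub_nonneg, div_le_one (by linarith)]; exact hN.le
  have hfin : tauCoef K N t θ₀ ≠ ∞ :=
    mul_ne_top ofReal_ne_top (ENNReal.rpow_ne_top_of_nonneg hp h2)
  have hcont : ContinuousAt (tauCoef K N t) θ₀ :=
    (ENNReal.continuous_const_mul ofReal_ne_top).continuousAt.comp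
      (ENNReal.continuous_rpow_const.continuousAt.comp h1)
  refine ⟨hfin, ?_⟩
  rcases eq_or_ne (tauCoef K N t θ₀) 0 with h0 | h0
  · simp [h0]
  · have : c * tauCoef K N t θ₀ < tauCoef K N t θ₀ := by
      conv_rhs => rw [← one_mul (tauCoef K N t θ₀)]
      exact (ENNReal.mul_lt_mul_iff_left h0 hfin).2 hc
    exact (hcont.eventually (lt_mem_nhds this)).mono fun _ h => h.le

theorem tauCoef_half_eq_top {K N θ : ℝ} (hN : 1 < N) (h : (N - 1) * Real.pi ^ 2 ≤ K * θ ^ 2) :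
    tauCoef K N (1 / 2) θ = ∞ := by
  have hp : 0 < 1 - 1 / N := by
    rw [sub_pos, div_lt_one (by linarith)]; exact hN
  rw [tauCoef, sigmaCoef, if_pos h, ENNReal.top_rpow_of_pos hp, ENNReal.mul_top]
  simp only [ne_eq, ENNReal.ofReal_eq_zero, not_le]
  positivity

/-- Diameter bound of Bonnet–Myers type: rays cannot be longer than the critical length. -/
theorem RaySetting.subcritical {X : Type*} [MetricSpace X] [CompleteSpace X]
    [SecondCountableTopology X] [MeasurableSpace X] [BorelSpace X]
    [MeasurableSpace C(unitInterval, X)] [BorelSpace C(unitInterval, X)]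
    {m : Measure X} [IsProbabilityMeasure m] {K N : ℝ} (hN : 1 < N) (hcd : CDone K N m)
    {u : X → ℝ} (hu : LipschitzWith 1 u) (S : RaySetting m u)
    (hcont : ∀ᵐ α ∂S.q, ContinuousOn (S.h α) (S.dom α) ∧
      ∀ r ∈ interior (S.dom α), 0 < S.h α r)
    {Qb : Set X} (hQb : MeasurableSet Qb) (hQbsub : Qb ⊆ S.Q) (hQbpos : 0 < S.q Qb)
    {R0 R1 L : ℝ} (hR : R0 < R1) (hL : 0 < L)
    (hdom : ∀ᵐ α ∂S.q.restrict Qb, Icc R0 (R1 + L) ⊆ S.dom α) :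
    K * (R1 - R0) ^ 2 < (N - 1) * Real.pi ^ 2 := by
  by_contra! hge
  have hN0 : 0 < N := by linarith
  have hK : 0 < K := by
    have : 0 < (N - 1) * Real.pi ^ 2 := mul_pos (by linarith) (pow_pos Real.pi_pos 2)
    exact pos_of_mul_pos_left (this.trans_le hge) (sq_nonneg _)
  have hne : NeZero (S.q.restrict Qb) := ⟨fun h0 =>
    hQbpos.ne' (Measure.restrict_eq_zero.1 h0)⟩
  -- at the midpoint of a slightly longer interval the distortion coefficients are infinite
  have key : ∀ n : ℕ, _ := fun n => S.pointwise hN hcd hu hcont hQb hQbsub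
    (R0 := R0 + L / 4) (R1 := R1 + L / 2) (L0 := 1) (L1 := 1) (by linarith) one_pos one_pos
    (⟨1 / 2, by norm_num, by norm_num⟩ : unitInterval) (T0 := n) (T1 := n)
    (natCast_ne_top n) (natCast_ne_top n) (δ := L / 4) (by positivity) (by
      intro θ hθ
      rw [abs_le] at hθ
      have h1 : R1 - R0 ≤ θ := by linarith [hθ.1]
      have h2 : (N - 1) * Real.pi ^ 2 ≤ K * θ ^ 2 := by
        refine hge.trans ?_
        gcongr
      have h3 : (1:ℝ) - 1 / 2 = 1 / 2 := by norm_num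
      simp only [h3]
      rw [tauCoef_half_eq_top hN h2]
      simp)
  obtain ⟨α, k1, k2, k3⟩ := ((ae_all_iff.2 key).and (hdom.and (ae_restrict_of_ae hcont))).exists
  have hpos : 0 < S.h α (R0 + L / 4) := by
    refine k3.2 _ (interior_maximal (Ioo_subset_Icc_self.trans k2) isOpen_Ioo ⟨?_, ?_⟩) <;>
      linarith
  set x : ℝ≥0∞ := (ENNReal.ofReal 1 * ENNReal.ofReal (S.h α (R0 + L / 4))) ^ (1 / N) with hx
  have hx0 : x ≠ 0 := by
    rw [hx, ENNReal.ofReal_one, one_mul]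
    exact (ENNReal.rpow_pos (ENNReal.ofReal_pos.2 hpos) ofReal_ne_top).ne'
  obtain ⟨n, hn⟩ := ENNReal.exists_nat_mul_gt hx0
    (ENNReal.rpow_ne_top_of_nonneg (by positivity : 0 ≤ 1 / N)
      (mul_ne_top ofReal_ne_top ofReal_ne_top))
  refine absurd (le_self_add.trans (k1 n (L / 2) (by positivity) ((Icc_subset_Icc ?_ ?_).trans k2)))
    (not_le.2 hn) <;> linarith

theorem nonneg_of_pos_interior {h : ℝ → ℝ} {I : Set ℝ} (hc : ContinuousOn h I)
    (hpos : ∀ r ∈ interior I, 0 < h r) {a b r : ℝ} (hI : Icc a b ⊆ I) (hr : r ∈ Ico a b) :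
    0 ≤ h r := by
  have hcr : ContinuousWithinAt h (Ioi r) r :=
    (hc r (hI ⟨hr.1, hr.2.le⟩)).mono_of_mem_nhdsWithin
      (Filter.mem_of_superset (Ioo_mem_nhdsGT hr.2)
        (fun x hx => hI ⟨hr.1.trans hx.1.le, hx.2.le⟩))
  refine ge_of_tendsto hcr ?_
  filter_upwards [Ioo_mem_nhdsGT hr.2] with x hx
  exact (hpos x (interior_maximal (Ioo_subset_Icc_self.trans hI) isOpen_Ioo
    ⟨hr.1.trans_lt hx.1, hx.2⟩)).le

/-- **Lemma 3.3 (equation (3.2)).** In the ray-map setting for a `CD₁(K,N)` essentially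
non-branching space, for every Borel `Q̄ ⊆ Q` of positive `q`-measure and
`R₀ < R₁`, `L₀, L₁ > 0` with `[R₀, R₁ + L₁]` contained in the domain of `q`-a.e. `h_α`,
one has
`L_t^{1/N} sup_{Q̄} h_α(R_t)^{1/N} ≥ L₀^{1/N} τ^{(1-t)}(R₁-R₀) inf_{Q̄} h_α(R₀)^{1/N}
 + L₁^{1/N} τ^{(t)}(R₁-R₀) inf_{Q̄} h_α(R₁)^{1/N}` for all `t ∈ [0,1]`. -/
theorem density_sup_inf_inequality
    {X : Type*} [MetricSpace X] [CompleteSpace X] [SecondCountableTopology X]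
    [MeasurableSpace X] [BorelSpace X]
    [MeasurableSpace C(unitInterval, X)] [BorelSpace C(unitInterval, X)]
    (m : Measure X) [IsProbabilityMeasure m] [m.IsOpenPosMeasure]
    (K N : ℝ) (hN : 1 < N)
    (henb : EssentiallyNonBranching m)
    (hcd : CDone K N m)
    (u : X → ℝ) (hu : LipschitzWith 1 u)
    (S : RaySetting m u)
    (hcont : ∀ᵐ α ∂S.q, ContinuousOn (S.h α) (S.dom α) ∧
      ∀ r ∈ interior (S.dom α), 0 < S.h α r)
    (Qb : Set X) (hQbmeas : MeasurableSet Qb) (hQbsub : Qb ⊆ S.Q) (hQbpos : 0 < S.q Qb)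
    (R0 R1 L0 L1 : ℝ) (hR : R0 < R1) (hL0 : 0 < L0) (hL1 : 0 < L1)
    (hdom : ∀ᵐ α ∂S.q.restrict Qb, Icc R0 (R1 + L1) ⊆ S.dom α)
    (t : ℝ) (ht : t ∈ Icc (0:ℝ) 1) :
    ENNReal.ofReal (((1 - t) * L0 + t * L1) ^ (1 / N))
        * (⨆ α ∈ Qb, ENNReal.ofReal (S.h α ((1 - t) * R0 + t * R1) ^ (1 / N)))
      ≥ ENNReal.ofReal (L0 ^ (1 / N)) * tauCoef K N (1 - t) (R1 - R0)
          * (⨅ α ∈ Qb, ENNReal.ofReal (S.h α R0 ^ (1 / N)))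
        + ENNReal.ofReal (L1 ^ (1 / N)) * tauCoef K N t (R1 - R0)
          * (⨅ α ∈ Qb, ENNReal.ofReal (S.h α R1 ^ (1 / N))) := by
  have hN0 : 0 < N := by linarith
  have hN1 : 0 ≤ 1 / N := by positivity
  have ht0 := ht.1
  have ht1 := ht.2
  have hsub := S.subcritical hN hcd hu hcont hQbmeas hQbsub hQbpos hR hL1 hdom
  have hne : NeZero (S.q.restrict Qb) := ⟨by rw [Ne, Measure.restrict_eq_zero]; exact hQbpos.ne'⟩
  refine ENNReal.le_of_forall_lt_one_mul_le fun c hc => ?_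
  obtain ⟨hf0, hn0⟩ := tauCoef_near (t := 1 - t) hN (sub_pos.2 hR) hsub hc
  obtain ⟨hf1, hn1⟩ := tauCoef_near (t := t) hN (sub_pos.2 hR) hsub hc
  obtain ⟨δ, hδ, hball⟩ := Metric.eventually_nhds_iff_ball.1 (hn0.and hn1)
  have key := S.pointwise hN hcd hu hcont hQbmeas hQbsub hR hL0 hL1 ⟨t, ht⟩
    (mul_ne_top hc.ne_top hf0) (mul_ne_top hc.ne_top hf1) (half_pos hδ) (by
      intro θ hθ
      exact hball θ (by rw [Metric.mem_ball, Real.dist_eq]; linarith))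
  obtain ⟨α, hα, k1, k2, k3⟩ := ((ae_restrict_mem hQbmeas).and
    (key.and (hdom.and (ae_restrict_of_ae hcont)))).exists
  have k4 := k1 L1 hL1 k2
  have hnn : ∀ r ∈ Ico R0 (R1 + L1), 0 ≤ S.h α r := fun r hr =>
    nonneg_of_pos_interior k3.1 k3.2 k2 hr
  have h0 := hnn R0 ⟨le_rfl, by linarith⟩
  have h1 := hnn R1 ⟨hR.le, by linarith⟩
  have h2 := hnn ((1 - t) * R0 + t * R1) ⟨by nlinarith, by nlinarith⟩
  have hLt : 0 ≤ (1 - t) * L0 + t * L1 :=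
    add_nonneg (mul_nonneg (by linarith) hL0.le) (mul_nonneg ht0 hL1.le)
  have i0 : (⨅ α ∈ Qb, ENNReal.ofReal (S.h α R0 ^ (1 / N)))
      ≤ ENNReal.ofReal (S.h α R0) ^ (1 / N) := by
    rw [ENNReal.ofReal_rpow_of_nonneg h0 hN1]; exact iInf₂_le α hα
  have i1 : (⨅ α ∈ Qb, ENNReal.ofReal (S.h α R1 ^ (1 / N)))
      ≤ ENNReal.ofReal (S.h α R1) ^ (1 / N) := by
    rw [ENNReal.ofReal_rpow_of_nonneg h1 hN1]; exact iInf₂_le α hα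
  have it : ENNReal.ofReal (S.h α ((1 - t) * R0 + t * R1)) ^ (1 / N)
      ≤ ⨆ α ∈ Qb, ENNReal.ofReal (S.h α ((1 - t) * R0 + t * R1) ^ (1 / N)) := by
    rw [ENNReal.ofReal_rpow_of_nonneg h2 hN1]
    exact le_iSup₂ (f := fun α (_ : α ∈ Qb) =>
      ENNReal.ofReal (S.h α ((1 - t) * R0 + t * R1) ^ (1 / N))) α hα
  simp only [ENNReal.mul_rpow_of_nonneg _ _ hN1] at k4
  rw [← ENNReal.ofReal_rpow_of_nonneg hL0.le hN1, ← ENNReal.ofReal_rpow_of_nonneg hL1.le hN1,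
    ← ENNReal.ofReal_rpow_of_nonneg hLt hN1]
  calc _ ≤ c * (ENNReal.ofReal L0 ^ (1 / N) * tauCoef K N (1 - t) (R1 - R0)
          * ENNReal.ofReal (S.h α R0) ^ (1 / N)
        + ENNReal.ofReal L1 ^ (1 / N) * tauCoef K N t (R1 - R0)
          * ENNReal.ofReal (S.h α R1) ^ (1 / N)) := by gcongr
    _ = c * tauCoef K N (1 - t) (R1 - R0)
          * (ENNReal.ofReal L0 ^ (1 / N) * ENNReal.ofReal (S.h α R0) ^ (1 / N))
        + c * tauCoef K N t (R1 - R0)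
          * (ENNReal.ofReal L1 ^ (1 / N) * ENNReal.ofReal (S.h α R1) ^ (1 / N)) := by ring
    _ ≤ _ := k4
    _ ≤ _ := by gcongr

end CDNote
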